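/- arXiv:0905.2497 — 2 statements merged into one kernel-verified Lean document; each statement's English description precedes it below -/
import Mathlib

section
/- Under the polynomial parametric setting and the Archimedean assumption, assume K_y is nonempty for every y ∈ Y and that for φ-almost all y ∈ Y the value J(y) is attained at a unique minimizer x*(y). For each i ≥ i_0 let z^i be a nearly optimal feasible solution of the i-th semidefinite relaxation with L_{z^i}(f) ≤ ρ_i + 1/i. Then there is a Borel measurable mapping g : Y → ℝ^n with g(y) ∈ K_y and J(y) = f(g(y),y) for every y ∈ Y, such that for every α ∈ ℕ^n and β ∈ ℕ^p, lim_{i→∞} z^i_{αβ} = ∫_Y y^β g(y)^α dφ(y). In particular, for every k = 1, …, n and every β ∈ ℕ^p, lim_{i→∞} z^i_{e(k)β} = ∫_Y y^β g_k(y) dφ(y), where e(k) ∈ ℕ^n is the k-th unit multi-index. -/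
open MeasureTheory MvPolynomial Filter Topology Set

noncomputable section

/-- The Riesz-like linear functional `L_z` associated with a double-indexed real
sequence `z = (z_{αβ})`, sending `Σ f_{αβ} x^α y^β` to `Σ f_{αβ} z_{αβ}`. -/
def Lz (n p : ℕ) (z : (Fin n → ℕ) → (Fin p → ℕ) → ℝ)
    (q : MvPolynomial (Fin n ⊕ Fin p) ℝ) : ℝ :=
  ∑ d ∈ q.support, q.coeff d * z (fun k => d (Sum.inl k)) (fun l => d (Sum.inr l))

/-- Every monomial `x^α y^β` of `q` satisfies `|α| ≤ i` and `|β| ≤ i`, i.e. `q` is in the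
span of the monomial basis indexing the moment matrix `M_i`. -/
def DegOK (n p : ℕ) (i : ℕ) (q : MvPolynomial (Fin n ⊕ Fin p) ℝ) : Prop :=
  ∀ d ∈ q.support, (∑ k, d (Sum.inl k)) ≤ i ∧ (∑ l, d (Sum.inr l)) ≤ i

/-- `⌈deg h / 2⌉`. -/
def halfDeg {σ : Type*} (h : MvPolynomial σ ℝ) : ℕ := (h.totalDegree + 1) / 2

/-- Feasibility of the sequence `z` for the `i`-th moment relaxation:
`M_i(z) ⪰ 0`, `M_{i-v_j}(h_j z) ⪰ 0` for all `j`, and `L_z(y^β) = γ_β` for `|β| ≤ 2i`.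
Positive semidefiniteness of the moment (resp. localizing) matrix is expressed through
nonnegativity of the associated quadratic forms `c ↦ cᵀ M_i(z) c = L_z(q²)`
(resp. `cᵀ M_{i-v_j}(h_j z) c = L_z(h_j q²)`), `q` ranging over the polynomials spanned
by the monomials indexing the matrix. -/
def RelaxFeasible (n p : ℕ) {ι : Type*} [Fintype ι]
    (H : ι → MvPolynomial (Fin n ⊕ Fin p) ℝ)
    (γ : (Fin p → ℕ) → ℝ) (i : ℕ)
    (z : (Fin n → ℕ) → (Fin p → ℕ) → ℝ) : Prop :=
  (∀ q, DegOK n p i q → 0 ≤ Lz n p z (q ^ 2)) ∧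
  (∀ j, ∀ q, DegOK n p (i - halfDeg (H j)) q → 0 ≤ Lz n p z (H j * q ^ 2)) ∧
  (∀ β : Fin p → ℕ, (∑ l, β l) ≤ 2 * i → z (fun _ => 0) β = γ β)

/-- Optimal value `ρ_i` of the `i`-th (primal) semidefinite relaxation. -/
def rhoSDP (n p : ℕ) {ι : Type*} [Fintype ι]
    (H : ι → MvPolynomial (Fin n ⊕ Fin p) ℝ)
    (γ : (Fin p → ℕ) → ℝ) (f : MvPolynomial (Fin n ⊕ Fin p) ℝ) (i : ℕ) : ℝ :=
  sInf {r | ∃ z, RelaxFeasible n p H γ i z ∧ r = Lz n p z f}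

/-- Evaluation of a polynomial in `(x, y)` at a point of `ℝ^n × ℝ^p`. -/
def evalXY (n p : ℕ) (q : MvPolynomial (Fin n ⊕ Fin p) ℝ)
    (w : (Fin n → ℝ) × (Fin p → ℝ)) : ℝ :=
  eval (Sum.elim w.1 w.2) q

/-- Optimal value `ρ` of the infinite-dimensional problem `P`: the infimum of `∫_K f dμ`
over finite Borel measures `μ` on `K` whose marginal on `ℝ^p` is `φ`. -/
def rhoP (n p : ℕ) (f : MvPolynomial (Fin n ⊕ Fin p) ℝ)
    (K : Set ((Fin n → ℝ) × (Fin p → ℝ))) (φ : Measure (Fin p → ℝ)) : ℝ :=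
  sInf {r | ∃ μ : Measure ((Fin n → ℝ) × (Fin p → ℝ)),
    IsFiniteMeasure μ ∧ μ Kᶜ = 0 ∧ μ.map Prod.snd = φ ∧
    r = ∫ w in K, evalXY n p f w ∂μ}

/-- `i₀ := max(⌈deg f / 2⌉, max_j ⌈deg h_j / 2⌉)`. -/
def iZero (n p : ℕ) {ι : Type*} [Fintype ι]
    (H : ι → MvPolynomial (Fin n ⊕ Fin p) ℝ)
    (f : MvPolynomial (Fin n ⊕ Fin p) ℝ) : ℕ :=
  max (halfDeg f) (Finset.univ.sup fun j => halfDeg (H j))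

/-- The Archimedean (Putinar) assumption for the family `H`: for some `N`,
`N - ‖(x,y)‖²` lies in the quadratic module generated by the `H j`. -/
def ArchimedeanQM (n p : ℕ) {ι : Type*} [Fintype ι]
    (H : ι → MvPolynomial (Fin n ⊕ Fin p) ℝ) : Prop :=
  ∃ (N : ℝ) (σ0 : MvPolynomial (Fin n ⊕ Fin p) ℝ)
    (σ : ι → MvPolynomial (Fin n ⊕ Fin p) ℝ),
    IsSumSq σ0 ∧ (∀ j, IsSumSq (σ j)) ∧
    C N - (∑ i : Fin n ⊕ Fin p, X i ^ 2) = σ0 + ∑ j, σ j * H j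


/-! Quadratic modules -/

structure IsQM {A : Type*} [CommRing A] (Q : Set A) : Prop where
  sq : ∀ a, a ^ 2 ∈ Q
  add : ∀ {a b}, a ∈ Q → b ∈ Q → a + b ∈ Q
  mul : ∀ b {a}, a ∈ Q → b ^ 2 * a ∈ Q

section QM
variable {A : Type*} [CommRing A]

theorem IsQM.zero {Q : Set A} (h : IsQM Q) : (0 : A) ∈ Q := by simpa using h.sq 0

theorem IsQM.one {Q : Set A} (h : IsQM Q) : (1 : A) ∈ Q := by simpa using h.sq 1

theorem IsQM.sos_mul {Q : Set A} (h : IsQM Q) {s : A} (hs : IsSumSq s) {a : A} (ha : a ∈ Q) :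
    s * a ∈ Q := by
  induction hs with
  | zero => simpa using h.zero
  | sq_add b _ ih =>
    rw [add_mul, ← pow_two]
    exact h.add (h.mul b ha) ih

theorem IsQM.sos {Q : Set A} (h : IsQM Q) {s : A} (hs : IsSumSq s) : s ∈ Q := by
  simpa using h.sos_mul hs h.one

variable [Algebra ℝ A]

theorem IsQM.smul {Q : Set A} (h : IsQM Q) {r : ℝ} (hr : 0 ≤ r) {a : A} (ha : a ∈ Q) :
    algebraMap ℝ A r * a ∈ Q := by
  have := h.mul (algebraMap ℝ A (Real.sqrt r)) ha
  rwa [← map_pow, Real.sq_sqrt hr] at this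

theorem IsQM.const {Q : Set A} (h : IsQM Q) {r : ℝ} (hr : 0 ≤ r) :
    algebraMap ℝ A r ∈ Q := by
  simpa using h.smul hr h.one

theorem IsQM.neg_const {Q : Set A} (h : IsQM Q) (h1 : (-1 : A) ∉ Q) {r : ℝ}
    (hr : algebraMap ℝ A r ∈ Q) : 0 ≤ r := by
  by_contra! hlt
  apply h1
  have := h.smul (r := (-r)⁻¹) (by rw [inv_nonneg]; linarith) hr
  rw [← map_mul] at this
  have e : (-r)⁻¹ * r = -1 := by
    have : r ≠ 0 := hlt.ne
    field_simp
  rw [e] at this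
  simpa using this

theorem IsQM.extend {Q : Set A} (h : IsQM Q) (a : A) :
    IsQM {x | ∃ q ∈ Q, ∃ s, IsSumSq s ∧ x = q + s * a} where
  sq b := ⟨b ^ 2, h.sq b, 0, IsSumSq.zero, by ring⟩
  add := by
    rintro _ _ ⟨q, hq, s, hs, rfl⟩ ⟨q', hq', s', hs', rfl⟩
    exact ⟨q + q', h.add hq hq', s + s', hs.add hs', by ring⟩
  mul := by
    rintro b _ ⟨q, hq, s, hs, rfl⟩
    refine ⟨b ^ 2 * q, h.mul b hq, b * b * s, (IsSumSq.mul_self b).mul hs, by ring⟩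

theorem IsQM.support {Q : Set A} (h : IsQM Q) {x : A} (hx : x ∈ Q) (hx' : -x ∈ Q) (a : A) :
    x * a ∈ Q := by
  have h1 := h.smul (r := 1/4) (by norm_num) (h.add (h.mul (a + 1) hx) (h.mul (a - 1) hx'))
  have e : algebraMap ℝ A (1/4) * ((a + 1) ^ 2 * x + (a - 1) ^ 2 * -x)
      = (algebraMap ℝ A (1/4) * algebraMap ℝ A 4) * (x * a) := by
    have : algebraMap ℝ A 4 = 4 := map_ofNat _ 4
    rw [this]; ring
  rw [e, ← map_mul] at h1
  simpa using h1

theorem IsQM.total {Q : Set A} (h : IsQM Q) (h1 : (-1 : A) ∉ Q)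
    (hmax : ∀ Q', IsQM Q' → Q ⊆ Q' → (-1 : A) ∉ Q' → Q' ⊆ Q) (a : A) : a ∈ Q ∨ -a ∈ Q := by
  by_contra! hcon
  have key : ∀ b, b ∉ Q → ∃ q ∈ Q, ∃ s, IsSumSq s ∧ (-1 : A) = q + s * b := by
    intro b hb
    by_contra hc
    refine hb (hmax _ (h.extend b) ?_ hc ⟨0, h.zero, 1, by simpa using IsSumSq.mul_self (1:A), by ring⟩)
    exact fun q hq => ⟨q, hq, 0, IsSumSq.zero, by ring⟩
  obtain ⟨q1, hq1, s, hs, e1⟩ := key a hcon.1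
  obtain ⟨q2, hq2, t, ht, e2⟩ := key (-a) hcon.2
  have hs' : -s ∈ Q := by
    have : -s = t + s * q2 + t * q1 := by
      linear_combination s * e2 + t * e1
    rw [this]
    exact h.add (h.add (h.sos ht) (h.sos_mul hs hq2)) (h.sos_mul ht hq1)
  apply h1
  rw [e1]
  exact h.add hq1 (h.support (h.sos hs) hs' a)

def PP (Q : Set A) (a : A) (t : ℝ) : Prop :=
  ∀ ε : ℝ, 0 < ε → a - algebraMap ℝ A (t - ε) ∈ Q ∧ algebraMap ℝ A (t + ε) - a ∈ Q

theorem PP.unique {Q : Set A} (h : IsQM Q) (h1 : (-1 : A) ∉ Q) {a : A} {t t' : ℝ}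
    (ht : PP Q a t) (ht' : PP Q a t') : t = t' := by
  have key : ∀ t t', PP Q a t → PP Q a t' → t' ≤ t := by
    intro t t' ht ht'
    by_contra! hlt
    have hε : 0 < (t' - t) / 4 := by linarith
    have := h.add (ht _ hε).2 (ht' _ hε).1
    have e : algebraMap ℝ A (t + (t' - t) / 4) - a + (a - algebraMap ℝ A (t' - (t' - t) / 4))
      = algebraMap ℝ A ((t + (t' - t) / 4) - (t' - (t' - t) / 4)) := by
      rw [map_sub _ (t + (t' - t) / 4)]; ring
    rw [e] at this
    have := h.neg_const h1 this
    linarith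
  exact le_antisymm (key _ _ ht' ht) (key _ _ ht ht')

theorem PP.add {Q : Set A} (h : IsQM Q) {a b : A} {t u : ℝ}
    (ht : PP Q a t) (hu : PP Q b u) : PP Q (a + b) (t + u) := by
  intro ε hε
  have h1 := ht (ε/2) (by linarith)
  have h2 := hu (ε/2) (by linarith)
  constructor
  · have := h.add h1.1 h2.1
    convert this using 1
    rw [show t + u - ε = (t - ε/2) + (u - ε/2) by ring, map_add]; ring
  · have := h.add h1.2 h2.2
    convert this using 1
    rw [show t + u + ε = (t + ε/2) + (u + ε/2) by ring, map_add]; ring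

theorem PP.neg {Q : Set A} {a : A} {t : ℝ}
    (ht : PP Q a t) : PP Q (-a) (-t) := by
  intro ε hε
  have h1 := ht ε hε
  constructor
  · convert h1.2 using 1
    rw [show -t - ε = -(t + ε) by ring, map_neg]; ring
  · convert h1.1 using 1
    rw [show -t + ε = -(t - ε) by ring, map_neg]; ring

theorem PP.const {Q : Set A} (h : IsQM Q) (r : ℝ) : PP Q (algebraMap ℝ A r) r := by
  intro ε hε
  constructor
  · rw [← map_sub]; exact h.const (by linarith)
  · rw [← map_sub]; exact h.const (by linarith)

theorem PP.smul_pos {Q : Set A} (h : IsQM Q) {a : A} {t : ℝ}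
    (ht : PP Q a t) {r : ℝ} (hr : 0 < r) : PP Q (algebraMap ℝ A r * a) (r * t) := by
  intro ε hε
  have h1 := ht (ε / r) (by positivity)
  constructor
  · convert h.smul hr.le h1.1 using 1
    rw [show r * t - ε = r * (t - ε / r) by field_simp, map_mul]; ring
  · convert h.smul hr.le h1.2 using 1
    rw [show r * t + ε = r * (t + ε / r) by field_simp, map_mul]; ring

theorem PP.smul {Q : Set A} (h : IsQM Q) {a : A} {t : ℝ}
    (ht : PP Q a t) (r : ℝ) : PP Q (algebraMap ℝ A r * a) (r * t) := by
  rcases lt_trichotomy r 0 with hr | rfl | hr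
  · have := (ht.smul_pos h (r := -r) (by linarith)).neg
    simpa using this
  · simpa using PP.const h 0
  · exact ht.smul_pos h hr

theorem PP.sq {Q : Set A} (h : IsQM Q) {a : A} {t : ℝ}
    (ht : PP Q a t) : PP Q (a ^ 2) (t ^ 2) := by
  have hb : PP Q (a + algebraMap ℝ A (-t)) 0 := by
    simpa using ht.add h (PP.const h (-t))
  set b := a + algebraMap ℝ A (-t) with hbdef
  have hb2 : PP Q (b ^ 2) 0 := by
    intro ε hε
    constructor
    · have := h.add (h.sq b) (h.const hε.le)
      convert this using 1
      rw [zero_sub, map_neg]; ring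
    · set δ := Real.sqrt ε
      have hδ : 0 < δ := Real.sqrt_pos.2 hε
      have hδ2 : δ ^ 2 = ε := Real.sq_sqrt hε.le
      obtain ⟨k1, k2⟩ := hb δ hδ
      have := h.smul (r := (2 * δ)⁻¹) (by positivity)
        (h.add (h.mul (algebraMap ℝ A δ - b) k1) (h.mul (algebraMap ℝ A δ + b) k2))
      convert this using 1
      have e1 : algebraMap ℝ A ((2 * δ)⁻¹) * (2 * algebraMap ℝ A δ) = 1 := by
        have : (2 : A) = algebraMap ℝ A 2 := (map_ofNat _ 2).symm
        rw [this, ← map_mul, ← map_mul, inv_mul_cancel₀ (by positivity), map_one]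
      simp only [zero_add, zero_sub, map_neg]
      rw [← hδ2, map_pow]
      linear_combination -(algebraMap ℝ A δ ^ 2 - b ^ 2) * e1
  have := (hb2.add h (ht.smul h (2 * t))).add h (PP.const h (-(t^2)))
  convert this using 1
  · rw [hbdef]; simp only [map_neg, map_mul, map_pow, map_ofNat]; ring
  · ring

theorem IsQM.exists_hom {Q : Set A} (h : IsQM Q) (h1 : (-1 : A) ∉ Q)
    (htot : ∀ a, a ∈ Q ∨ -a ∈ Q) (harch : ∀ a, ∃ k : ℝ, algebraMap ℝ A k - a ∈ Q) :
    ∃ α : A →ₐ[ℝ] ℝ, ∀ a ∈ Q, 0 ≤ α a := by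
  have hex : ∀ a, ∃ t, PP Q a t := by
    intro a
    set S := {r : ℝ | a - algebraMap ℝ A r ∈ Q} with hS
    have hne : S.Nonempty := by
      obtain ⟨k, hk⟩ := harch (-a)
      refine ⟨-k, ?_⟩
      simp only [hS, mem_setOf_eq, map_neg]
      convert hk using 1; ring
    have hbd : BddAbove S := by
      obtain ⟨k, hk⟩ := harch a
      refine ⟨k, fun r hr => ?_⟩
      have := h.add hk hr
      have e : algebraMap ℝ A k - a + (a - algebraMap ℝ A r) = algebraMap ℝ A (k - r) := by
        rw [map_sub]; ring
      rw [e] at this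
      linarith [h.neg_const h1 this]
    refine ⟨sSup S, fun ε hε => ⟨?_, ?_⟩⟩
    · obtain ⟨r, hr, hlt⟩ := exists_lt_of_lt_csSup hne (show sSup S - ε < sSup S by linarith)
      have := h.add hr (h.const (r := r - (sSup S - ε)) (by linarith))
      convert this using 1
      rw [map_sub _ r]; ring
    · rcases htot (a - algebraMap ℝ A (sSup S + ε)) with hh | hh
      · have := le_csSup hbd (show sSup S + ε ∈ S from hh)
        linarith
      · convert hh using 1; ring
  choose α hα using hex
  have huniq : ∀ {a t}, PP Q a t → α a = t := fun ht => (hα _).unique h h1 ht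
  have hadd : ∀ a b, α (a + b) = α a + α b := fun a b => huniq ((hα a).add h (hα b))
  have hsmul : ∀ (r : ℝ) a, α (r • a) = r * α a := fun r a => by
    rw [Algebra.smul_def]; exact huniq ((hα a).smul h r)
  have hsq : ∀ a, α (a ^ 2) = α a ^ 2 := fun a => huniq ((hα a).sq h)
  let αl : A →ₗ[ℝ] ℝ := ⟨⟨α, hadd⟩, by intro r a; simpa using hsmul r a⟩
  refine ⟨AlgHom.ofLinearMap αl ?_ ?_, ?_⟩
  · change α 1 = 1
    exact huniq (by simpa using PP.const h 1)
  · intro a b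
    change α (a * b) = α a * α b
    have e1 := hsq (a + b)
    have e2 : (a + b) ^ 2 = a ^ 2 + b ^ 2 + (2:ℝ) • (a * b) := by
      rw [Algebra.smul_def]; simp only [map_ofNat]; ring
    rw [e2, hadd, hadd, hsmul, hadd, hsq, hsq] at e1
    linarith
  · intro a ha
    change 0 ≤ α a
    by_contra! hlt
    have := h.add ha ((hα a) (-(α a)/2) (by linarith)).2
    rw [add_sub_cancel] at this
    have := h.neg_const h1 this
    linarith

theorem IsQM.putinar {M : Set A} (h : IsQM M)
    (harch : ∀ a, ∃ k : ℝ, algebraMap ℝ A k - a ∈ M) (q : A)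
    (hq : ∀ α : A →ₐ[ℝ] ℝ, (∀ m ∈ M, 0 ≤ α m) → 0 < α q) : q ∈ M := by
  have step1 : ∃ m ∈ M, ∃ s, IsSumSq s ∧ (-1 : A) = m + s * (-q) := by
    by_contra hc
    set M' := {x | ∃ m ∈ M, ∃ s, IsSumSq s ∧ x = m + s * (-q)} with hM'
    have hM'q : IsQM M' := h.extend (-q)
    obtain ⟨Q, hMQ, hQ⟩ := zorn_subset_nonempty {Q : Set A | IsQM Q ∧ (-1 : A) ∉ Q} (by
      intro c hc hchain hne
      refine ⟨⋃₀ c, ⟨⟨?_, ?_, ?_⟩, ?_⟩, fun s hs => subset_sUnion_of_mem hs⟩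
      · intro a
        obtain ⟨s, hs⟩ := hne
        exact ⟨s, hs, (hc hs).1.sq a⟩
      · rintro a b ⟨s, hs, ha⟩ ⟨t, ht, hb⟩
        rcases hchain.total hs ht with hst | hst
        · exact ⟨t, ht, (hc ht).1.add (hst ha) hb⟩
        · exact ⟨s, hs, (hc hs).1.add ha (hst hb)⟩
      · rintro b a ⟨s, hs, ha⟩
        exact ⟨s, hs, (hc hs).1.mul b ha⟩
      · rintro ⟨s, hs, ha⟩
        exact (hc hs).2 ha) M' ⟨hM'q, hc⟩
    have hQm := hQ.prop
    have hMM' : M ⊆ M' := fun m hm => ⟨m, hm, 0, IsSumSq.zero, by ring⟩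
    obtain ⟨α, hα⟩ := hQm.1.exists_hom hQm.2
      (hQm.1.total hQm.2 (fun Q' h1 h2 h3 => hQ.le_of_ge ⟨h1, h3⟩ h2))
      (fun a => by
        obtain ⟨k, hk⟩ := harch a
        exact ⟨k, hMQ (hMM' hk)⟩)
    have p1 := hq α (fun m hm => hα m (hMQ (hMM' hm)))
    have p2 := hα (-q) (hMQ ⟨0, h.zero, 1, by simpa using IsSumSq.mul_self (1:A), by ring⟩)
    rw [map_neg] at p2
    linarith
  obtain ⟨m, hm, s, hs, e⟩ := step1
  obtain ⟨k1, hk1⟩ := harch s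
  obtain ⟨k2, hk2⟩ := harch (s ^ 2 * q)
  obtain ⟨k, hk0, hks, hkq⟩ : ∃ k : ℝ, 0 < k ∧ algebraMap ℝ A (2 * k) - s ∈ M ∧
      algebraMap ℝ A k - s ^ 2 * q ∈ M := by
    refine ⟨max 1 (max k1 k2), by positivity, ?_, ?_⟩
    · have h1 : k1 ≤ max 1 (max k1 k2) := by simp
      have h2 : 1 ≤ max 1 (max k1 k2) := by simp
      have := h.add hk1 (h.const (r := 2 * max 1 (max k1 k2) - k1) (by linarith))
      convert this using 1
      rw [map_sub]; ring
    · have h1 : k2 ≤ max 1 (max k1 k2) := by simp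
      have := h.add hk2 (h.const (r := max 1 (max k1 k2) - k2) (by linarith))
      convert this using 1
      rw [map_sub]; ring
  have step : ∀ r : ℝ, 0 ≤ r → q + algebraMap ℝ A r ∈ M → q + algebraMap ℝ A (r - 1 / k) ∈ M := by
    intro r hr hqr
    have t1 := h.mul (algebraMap ℝ A k - s) hqr
    have t2 := h.smul (r := 2 * k) (by positivity) hm
    have t3 := h.smul hr (h.sos_mul hs hks)
    have := h.smul (r := 1 / k ^ 2) (by positivity) (h.add (h.add (h.add t1 t2) t3) hkq)
    convert this using 1
    have e1 : algebraMap ℝ A (1 / k ^ 2) * algebraMap ℝ A k ^ 2 = 1 := by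
      rw [← map_pow, ← map_mul, one_div, inv_mul_cancel₀ (by positivity), map_one]
    have e2 : algebraMap ℝ A (1 / k ^ 2) * algebraMap ℝ A k = algebraMap ℝ A (1 / k) := by
      rw [← map_mul]; congr 1; field_simp
    have em : m = s * q - 1 := by linear_combination -e
    rw [em, map_sub, map_mul, map_ofNat, ← e2]
    linear_combination -(q + algebraMap ℝ A r) * e1
  obtain ⟨r0, hr0⟩ := harch (-q)
  obtain ⟨r0, hr0⟩ : ∃ r : ℝ, q + algebraMap ℝ A r ∈ M := ⟨r0, by convert hr0 using 1; ring⟩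
  have iter : ∀ j : ℕ, q ∈ M ∨ q + algebraMap ℝ A (r0 - j * (1 / k)) ∈ M := by
    intro j
    induction j with
    | zero => right; simpa using hr0
    | succ j ih =>
      rcases ih with ih | ih
      · exact Or.inl ih
      · by_cases hr : 0 ≤ r0 - j * (1 / k)
        · right
          have := step _ hr ih
          convert this using 3
          push_cast; ring
        · left
          have := h.add ih (h.const (r := -(r0 - j * (1 / k))) (by linarith))
          convert this using 1
          rw [map_neg]; ring
  obtain ⟨j, hj⟩ := exists_nat_gt (r0 * k)
  rcases iter j with hh | hh
  · exact hh
  · have : r0 - j * (1 / k) ≤ 0 := by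
      have : r0 ≤ j * (1 / k) := by
        rw [mul_one_div, le_div_iff₀ hk0]; exact hj.le
      linarith
    have := h.add hh (h.const (r := -(r0 - j * (1 / k))) (by linarith))
    convert this using 1
    rw [map_neg]; ring

end QM

section PolyQM
variable {σ ι : Type*}

def QMset (H : ι → MvPolynomial σ ℝ) : AddSubmonoid (MvPolynomial σ ℝ) :=
  AddSubmonoid.closure {x | (∃ a, x = a ^ 2) ∨ ∃ j a, x = H j * a ^ 2}

theorem QMset_isQM (H : ι → MvPolynomial σ ℝ) : IsQM (QMset H : Set (MvPolynomial σ ℝ)) where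
  sq a := AddSubmonoid.subset_closure (Or.inl ⟨a, rfl⟩)
  add := fun ha hb => (QMset H).add_mem ha hb
  mul := by
    intro b a ha
    change b ^ 2 * a ∈ QMset H
    have ha' : a ∈ QMset H := ha
    induction ha' using AddSubmonoid.closure_induction with
    | mem x hx =>
      rcases hx with ⟨c, rfl⟩ | ⟨j, c, rfl⟩
      · exact AddSubmonoid.subset_closure (Or.inl ⟨b * c, by ring⟩)
      · exact AddSubmonoid.subset_closure (Or.inr ⟨j, b * c, by ring⟩)
    | zero => rw [mul_zero]; exact (QMset H).zero_mem
    | add x y hx hy ihx ihy => rw [mul_add]; exact (QMset H).add_mem (ihx hx) (ihy hy)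

theorem QMset_gen (H : ι → MvPolynomial σ ℝ) (j : ι) : H j ∈ QMset H :=
  AddSubmonoid.subset_closure (Or.inr ⟨j, 1, by ring⟩)

theorem QM_arch [Fintype σ] (M : Set (MvPolynomial σ ℝ)) (h : IsQM M) (N : ℝ)
    (hN : C N - (∑ i, X i ^ 2) ∈ M) (a : MvPolynomial σ ℝ) :
    ∃ k : ℝ, algebraMap ℝ (MvPolynomial σ ℝ) k - a ∈ M := by
  rw [MvPolynomial.algebraMap_eq]
  have hconst : ∀ {r : ℝ}, 0 ≤ r → (C r : MvPolynomial σ ℝ) ∈ M := fun hr => h.const hr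
  have hsm : ∀ {r : ℝ}, 0 ≤ r → ∀ {a}, a ∈ M → (C r : MvPolynomial σ ℝ) * a ∈ M :=
    fun hr _ ha => h.smul hr ha
  have hb : ∀ a : MvPolynomial σ ℝ, ∃ k : ℝ, 0 ≤ k ∧ C k - a ^ 2 ∈ M := by
    intro a
    induction a using MvPolynomial.induction_on with
    | C r => exact ⟨r ^ 2, by positivity, by rw [map_pow, sub_self]; exact h.zero⟩
    | add a b iha ihb =>
      obtain ⟨k, hk, ha⟩ := iha
      obtain ⟨l, hl, hb⟩ := ihb
      refine ⟨2 * (k + l), by positivity, ?_⟩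
      have := h.add (hsm (r := 2) (by norm_num) (h.add ha hb)) (h.sq (a - b))
      convert this using 1
      simp only [map_mul, map_add, map_ofNat]; ring
    | mul_X a i iha =>
      obtain ⟨k, hk, ha⟩ := iha
      have hX : C |N| - (X i : MvPolynomial σ ℝ) ^ 2 ∈ M := by
        classical
        have h1 : ∑ j ∈ Finset.univ.erase i, (X j : MvPolynomial σ ℝ) ^ 2 ∈ M := by
          apply h.sos
          apply IsSumSq.sum
          intro j _
          rw [pow_two]; exact IsSumSq.mul_self _
        have := h.add (h.add hN h1) (hconst (r := |N| - N) (by linarith [le_abs_self N]))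
        convert this using 1
        rw [← Finset.add_sum_erase _ _ (Finset.mem_univ i), map_sub]; ring
      refine ⟨|N| * k, by positivity, ?_⟩
      have := h.add (hsm (abs_nonneg N) ha) (h.mul a hX)
      convert this using 1
      rw [map_mul]; ring
  obtain ⟨k, hk, ha⟩ := hb a
  refine ⟨(k + 1) / 2, ?_⟩
  have := hsm (r := 1/2) (by norm_num) (h.add ha (h.sq (a - 1)))
  convert this using 1
  have e : (C (1/2) : MvPolynomial σ ℝ) * 2 = 1 := by
    rw [← C_1, ← map_ofNat C 2, ← map_mul]; congr 1; norm_num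
  have e2 : (C ((k + 1) / 2) : MvPolynomial σ ℝ) = C (1/2) * (C k + 1) := by
    rw [← C_1 (σ := σ), ← map_add, ← map_mul]; congr 1; ring
  rw [e2]
  linear_combination a * e

theorem putinar_poly (H : ι → MvPolynomial σ ℝ) 
    (harch : ∀ a, ∃ k : ℝ, algebraMap ℝ (MvPolynomial σ ℝ) k - a ∈ (QMset H : Set _))
    (q : MvPolynomial σ ℝ)
    (hq : ∀ w : σ → ℝ, (∀ j, 0 ≤ eval w (H j)) → 0 < eval w q) : q ∈ QMset H := by
  refine (QMset_isQM H).putinar harch q ?_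
  intro α hα
  have e : ∀ r, α r = eval (fun i => α (X i)) r := by
    intro r
    have : α = aeval (fun i => α (X i)) := by
      ext i; simp
    conv_lhs => rw [this]
    rfl
  rw [e]
  apply hq
  intro j
  rw [← e]
  exact hα _ (QMset_gen H j)

theorem nonneg_of_QM (H : ι → MvPolynomial σ ℝ) 
    (harch : ∀ a, ∃ k : ℝ, algebraMap ℝ (MvPolynomial σ ℝ) k - a ∈ (QMset H : Set _))
    (L : MvPolynomial σ ℝ →ₗ[ℝ] ℝ) (hL : ∀ q ∈ QMset H, 0 ≤ L q)
    (q : MvPolynomial σ ℝ)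
    (hq : ∀ w : σ → ℝ, (∀ j, 0 ≤ eval w (H j)) → 0 ≤ eval w q) : 0 ≤ L q := by
  have h1 : 0 ≤ L 1 := hL _ (QMset_isQM H).one
  have key : ∀ ε : ℝ, 0 < ε → 0 ≤ L q + ε * L 1 := by
    intro ε hε
    have := hL (q + ε • 1) (putinar_poly H harch _ (fun w hw => by
      have := hq w hw
      simp only [map_add, smul_eval, map_one, mul_one]; linarith))
    simpa using this
  by_contra! hlt
  have := key (-(L q) / (2 * (L 1 + 1))) (by apply div_pos <;> linarith)
  have e : -(L q) / (2 * (L 1 + 1)) * L 1 ≤ -(L q) / 2 := by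
    rw [div_mul_eq_mul_div, div_le_div_iff₀ (by linarith) (by norm_num)]
    nlinarith
  linarith

end PolyQM

theorem exists_measure {X : Type*} [TopologicalSpace X] [CompactSpace X] [T2Space X]
    [MeasurableSpace X] [BorelSpace X] {V : Type*} [AddCommGroup V] [Module ℝ V]
    (ev : V →ₗ[ℝ] C(X, ℝ)) (e : V) (he : ev e = 1) (L : V →ₗ[ℝ] ℝ)
    (hL : ∀ q, (∀ x, 0 ≤ ev q x) → 0 ≤ L q) :
    ∃ μ : Measure X, IsFiniteMeasure μ ∧ ∀ q, ∫ x, ev q x ∂μ = L q := by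
  have hker : LinearMap.ker ev ≤ LinearMap.ker L := by
    intro q hq
    rw [LinearMap.mem_ker] at hq ⊢
    apply le_antisymm
    · have := hL (-q) (fun x => by simp [hq])
      rw [map_neg] at this; linarith
    · exact hL q (fun x => by simp [hq])
  obtain ⟨L', hL'⟩ : ∃ L' : LinearMap.range ev →ₗ[ℝ] ℝ, ∀ q, L' (ev.rangeRestrict q) = L q := by
    refine ⟨((LinearMap.ker ev).liftQ L hker) ∘ₗ ev.quotKerEquivRange.symm.toLinearMap, fun q => ?_⟩
    have : ev.quotKerEquivRange.symm (ev.rangeRestrict q) = (LinearMap.ker ev).mkQ q := by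
      rw [LinearEquiv.symm_apply_eq]
      ext; simp
    simp only [LinearMap.comp_apply, LinearEquiv.coe_coe, this]
    simp
  let S : PointedCone ℝ C(X, ℝ) :=
    { carrier := {u | ∀ x, 0 ≤ u x}
      zero_mem' := fun x => le_rfl
      add_mem' := fun hu hv x => add_nonneg (hu x) (hv x)
      smul_mem' := fun c u hu x => mul_nonneg c.2 (hu x) }
  obtain ⟨G, hG1, hG2⟩ := riesz_extension S ⟨LinearMap.range ev, L'⟩ (by
    rintro ⟨_, q, rfl⟩ hx
    have := hL q hx
    rw [← hL'] at this
    exact this) (by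
    intro u
    refine ⟨⟨ev (‖u‖ • e), ⟨_, rfl⟩⟩, fun x => ?_⟩
    have := u.norm_coe_le_norm x
    rw [Real.norm_eq_abs] at this
    have := neg_abs_le (u x)
    simp [he]
    linarith)
  let Λ : CompactlySupportedContinuousMap X ℝ →ₚ[ℝ] ℝ := PositiveLinearMap.mk₀
    { toFun := fun u => G u.toContinuousMap
      map_add' := fun u v => by rw [← map_add]; rfl
      map_smul' := fun c u => by rw [← map_smul]; rfl } (fun u hu => hG2 _ (fun x => hu x))
  refine ⟨RealRMK.rieszMeasure Λ, inferInstance, fun q => ?_⟩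
  have := RealRMK.integral_rieszMeasure Λ (CompactlySupportedContinuousMap.continuousMapEquiv (ev q))
  change ∫ x, ev q x ∂_ = G (ev q) at this
  rw [this]
  have := hG1 (ev.rangeRestrict q)
  exact this.trans (hL' q)

section Lzsec
variable {n p : ℕ}

def LzLin (z : (Fin n → ℕ) → (Fin p → ℕ) → ℝ) : MvPolynomial (Fin n ⊕ Fin p) ℝ →ₗ[ℝ] ℝ :=
  (basisMonomials (Fin n ⊕ Fin p) ℝ).constr ℝ
    (fun d => z (fun k => d (Sum.inl k)) (fun l => d (Sum.inr l)))

theorem LzLin_monomial (z : (Fin n → ℕ) → (Fin p → ℕ) → ℝ) (d) (c : ℝ) :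
    LzLin z (monomial d c) = c * z (fun k => d (Sum.inl k)) (fun l => d (Sum.inr l)) := by
  have : (monomial d c : MvPolynomial (Fin n ⊕ Fin p) ℝ) = c • basisMonomials _ ℝ d := by
    rw [coe_basisMonomials, smul_monomial]; simp
  rw [this, map_smul, LzLin, Module.Basis.constr_basis, smul_eq_mul]

theorem Lz_eq (z : (Fin n → ℕ) → (Fin p → ℕ) → ℝ) (q) : Lz n p z q = LzLin z q := by
  conv_rhs => rw [q.as_sum]
  rw [map_sum, Lz]
  exact Finset.sum_congr rfl (fun d _ => (LzLin_monomial z d _).symm)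

theorem DegOK_of_le {i : ℕ} (q : MvPolynomial (Fin n ⊕ Fin p) ℝ) (h : q.totalDegree ≤ i) :
    DegOK n p i q := by
  intro d hd
  have h1 := (le_totalDegree hd).trans h
  rw [Finsupp.sum_fintype _ _ (fun _ => rfl), Fintype.sum_sum_type] at h1
  constructor <;> omega

theorem QM_eventually {ι : Type*} [Fintype ι] (H : ι → MvPolynomial (Fin n ⊕ Fin p) ℝ)
    (γ : (Fin p → ℕ) → ℝ) {q} (hq : q ∈ QMset H) :
    ∃ i1, ∀ i ≥ i1, ∀ z, RelaxFeasible n p H γ i z → 0 ≤ LzLin z q := by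
  induction hq using AddSubmonoid.closure_induction with
  | mem x hx =>
    rcases hx with ⟨a, rfl⟩ | ⟨j, a, rfl⟩
    · refine ⟨a.totalDegree, fun i hi z hz => ?_⟩
      rw [← Lz_eq]
      exact hz.1 a (DegOK_of_le a hi)
    · refine ⟨a.totalDegree + halfDeg (H j), fun i hi z hz => ?_⟩
      rw [← Lz_eq]
      exact hz.2.1 j a (DegOK_of_le a (by omega))
  | zero => exact ⟨0, fun i _ z _ => by simp⟩
  | add x y _ _ ihx ihy =>
    obtain ⟨i1, h1⟩ := ihx
    obtain ⟨i2, h2⟩ := ihy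
    refine ⟨max i1 i2, fun i hi z hz => ?_⟩
    rw [map_add]
    exact add_nonneg (h1 i (le_trans (le_max_left _ _) hi) z hz)
      (h2 i (le_trans (le_max_right _ _) hi) z hz)

end Lzsec

section Selection

def HitM {Ω E : Type*} [MeasurableSpace Ω] [TopologicalSpace E] (S : Ω → Set E) : Prop :=
  (∀ ω, IsCompact (S ω)) ∧ (∀ ω, (S ω).Nonempty) ∧
  ∀ C, IsClosed C → MeasurableSet {ω | (S ω ∩ C).Nonempty}

theorem HitM.step {Ω E : Type*} [MeasurableSpace Ω] [TopologicalSpace E] {S : Ω → Set E}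
    (h : HitM S) (u : E → ℝ) (hu : Continuous u) :
    HitM (fun ω => {x | x ∈ S ω ∧ ∀ x' ∈ S ω, u x ≤ u x'}) := by
  obtain ⟨hc, hn, hm⟩ := h
  refine ⟨fun ω => ?_, fun ω => ?_, fun C hC => ?_⟩
  · have : {x | x ∈ S ω ∧ ∀ x' ∈ S ω, u x ≤ u x'} = S ω ∩ ⋂ x' ∈ S ω, {x | u x ≤ u x'} := by
      ext x; simp
    change IsCompact {x | x ∈ S ω ∧ ∀ x' ∈ S ω, u x ≤ u x'}
    rw [this]
    exact (hc ω).inter_right (isClosed_biInter fun x' _ => isClosed_le hu continuous_const)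
  · obtain ⟨x, hx, hmin⟩ := (hc ω).exists_isMinOn (hn ω) hu.continuousOn
    exact ⟨x, hx, fun x' hx' => hmin hx'⟩
  · have key : {ω | ({x | x ∈ S ω ∧ ∀ x' ∈ S ω, u x ≤ u x'} ∩ C).Nonempty} =
        {ω | (S ω ∩ C).Nonempty} ∩ ⋂ r : ℚ, ({ω | (S ω ∩ {x | u x ≤ r}).Nonempty}ᶜ ∪
          {ω | (S ω ∩ (C ∩ {x | u x ≤ r})).Nonempty}) := by
      ext ω
      simp only [mem_inter_iff, mem_iInter, mem_union, mem_compl_iff]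
      constructor
      · rintro ⟨x, ⟨hx, hmin⟩, hxC⟩
        refine ⟨⟨x, hx, hxC⟩, fun r => ?_⟩
        by_cases hr : (S ω ∩ {x | u x ≤ r}).Nonempty
        · right
          obtain ⟨x', hx', hxr⟩ := hr
          exact ⟨x, hx, hxC, (hmin x' hx').trans hxr⟩
        · exact Or.inl hr
      · rintro ⟨hne, hr⟩
        obtain ⟨x0, hx0, hmin⟩ := ((hc ω).inter_right hC).exists_isMinOn hne hu.continuousOn
        refine ⟨x0, ⟨hx0.1, fun x' hx' => ?_⟩, hx0.2⟩
        by_contra! hlt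
        obtain ⟨r, h1, h2⟩ := exists_rat_btwn hlt
        rcases hr r with h3 | ⟨x1, hx1, hx1C, hx1r⟩
        · exact h3 ⟨x', hx', h1.le⟩
        · have h4 : u x0 ≤ u x1 := hmin ⟨hx1, hx1C⟩
          have h5 : u x1 ≤ r := hx1r
          linarith
    rw [key]
    exact (hm C hC).inter (MeasurableSet.iInter fun r =>
      (hm _ (isClosed_le hu continuous_const)).compl.union
        (hm _ (hC.inter (isClosed_le hu continuous_const))))

theorem HitM.list {Ω E : Type*} [MeasurableSpace Ω] [TopologicalSpace E]
    (l : List (E → ℝ)) : ∀ {S : Ω → Set E}, HitM S → (∀ u ∈ l, Continuous u) →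
    ∃ S' : Ω → Set E, HitM S' ∧ (∀ ω, S' ω ⊆ S ω) ∧
      ∀ u ∈ l, ∀ ω, ∀ x ∈ S' ω, ∀ x' ∈ S' ω, u x = u x' := by
  induction l with
  | nil => intro S h _; exact ⟨S, h, fun _ => le_rfl, by simp⟩
  | cons u l ih =>
    intro S h hl
    obtain ⟨S', h1, h2, h3⟩ := ih (h.step u (hl u (by simp))) (fun v hv => hl v (by simp [hv]))
    refine ⟨S', h1, fun ω x hx => (h2 ω hx).1, ?_⟩
    intro v hv ω x hx x' hx'
    rcases List.mem_cons.1 hv with rfl | hv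
    · exact le_antisymm ((h2 ω hx).2 x' (h2 ω hx').1) ((h2 ω hx').2 x (h2 ω hx).1)
    · exact h3 v hv ω x hx x' hx'

theorem exists_selection {n p : ℕ} (K : Set ((Fin n → ℝ) × (Fin p → ℝ))) (hK : IsCompact K)
    (Y : Set (Fin p → ℝ)) (hY : ∀ y ∈ Y, ∃ x, (x, y) ∈ K)
    (F : (Fin n → ℝ) × (Fin p → ℝ) → ℝ) (hF : Continuous F) :
    ∃ g : Y → (Fin n → ℝ), Measurable g ∧ ∀ y : Y, (g y, (y : Fin p → ℝ)) ∈ K ∧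
      ∀ x, (x, (y : Fin p → ℝ)) ∈ K → F (g y, y) ≤ F (x, y) := by
  have h0 : HitM (fun y : Y => {w | w ∈ K ∧ w.2 = (y : Fin p → ℝ)}) := by
    refine ⟨fun y => ?_, fun y => ?_, fun C hC => ?_⟩
    · exact hK.inter_right (isClosed_eq continuous_snd continuous_const)
    · obtain ⟨x, hx⟩ := hY y y.2
      exact ⟨(x, y), hx, rfl⟩
    · have : {y : Y | ({w | w ∈ K ∧ w.2 = (y : Fin p → ℝ)} ∩ C).Nonempty}
          = Subtype.val ⁻¹' (Prod.snd '' (K ∩ C)) := by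
        ext y
        constructor
        · rintro ⟨w, ⟨h1, h2⟩, h3⟩; exact ⟨w, ⟨h1, h3⟩, h2⟩
        · rintro ⟨w, ⟨h1, h3⟩, h2⟩; exact ⟨w, ⟨h1, h2⟩, h3⟩
      rw [this]
      exact measurable_subtype_coe (((hK.inter_right hC).image continuous_snd).isClosed.measurableSet)
  obtain ⟨S', h1, h2, h3⟩ := HitM.list
    (List.ofFn (fun k : Fin n => fun w : (Fin n → ℝ) × (Fin p → ℝ) => w.1 k)) (h0.step F hF) (by
      intro u hu
      obtain ⟨k, rfl⟩ := (List.mem_ofFn' _ _).1 hu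
      fun_prop)
  choose w hw using h1.2.1
  have hw2 : ∀ y, w y = ((w y).1, (y : Fin p → ℝ)) := fun y => Prod.ext rfl (h2 y (hw y)).1.2
  refine ⟨fun y => (w y).1, ?_, fun y => ⟨?_, fun x hx => ?_⟩⟩
  · refine measurable_of_isClosed (fun D hD => ?_)
    convert h1.2.2 (Prod.fst ⁻¹' D) (hD.preimage continuous_fst) using 1
    ext y
    constructor
    · intro hy; exact ⟨w y, hw y, hy⟩
    · rintro ⟨v, hv, hvD⟩
      have : (w y).1 = v.1 := by
        ext k
        exact h3 (fun w => w.1 k) ((List.mem_ofFn' _ _).2 ⟨k, rfl⟩) y _ (hw y) _ hv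
      change (w y).1 ∈ D
      rw [this]; exact hvD
  · rw [← hw2]; exact (h2 y (hw y)).1.1
  · change F ((w y).1, _) ≤ _
    rw [← hw2]; exact (h2 y (hw y)).2 _ ⟨hx, rfl⟩

end Selection

theorem continuous_evalXY {n p : ℕ} (q) : Continuous (evalXY n p q) := by
  unfold evalXY
  refine (MvPolynomial.continuous_eval q).comp ?_
  refine continuous_pi (fun i => ?_)
  rcases i with i | i <;> simp <;> fun_prop

theorem bdd_of_compact {E : Type*} [TopologicalSpace E] {K : Set E} (hK : IsCompact K) {q : E → ℝ}
    (hq : Continuous q) : ∃ c : ℝ, ∀ w ∈ K, ‖q w‖ ≤ c :=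
  hK.exists_bound_of_continuousOn hq.continuousOn

theorem integrable_sel {n p : ℕ} {K : Set ((Fin n → ℝ) × (Fin p → ℝ))} (hK : IsCompact K)
    {Ω : Type*} [MeasurableSpace Ω] (μ : Measure Ω) [IsFiniteMeasure μ]
    {q : (Fin n → ℝ) × (Fin p → ℝ) → ℝ} (hq : Continuous q)
    {w : Ω → (Fin n → ℝ) × (Fin p → ℝ)} (hw : Measurable w) (hwK : ∀ o, w o ∈ K) :
    Integrable (fun o => q (w o)) μ := by
  obtain ⟨c, hc⟩ := bdd_of_compact hK hq
  exact Integrable.of_bound ((hq.measurable.comp hw).aestronglyMeasurable) c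
    (ae_of_all _ fun o => hc _ (hwK o))

theorem integral_graph {n p : ℕ} {K : Set ((Fin n → ℝ) × (Fin p → ℝ))} (hK : IsCompact K)
    {Y : Set (Fin p → ℝ)} (π : K → Y) (hπ : Measurable π) (hπ2 : ∀ w, (π w : Fin p → ℝ) = w.1.2)
    (μ : Measure K) [IsFiniteMeasure μ] (ψ : Measure Y) [IsFiniteMeasure ψ] (hμ : μ.map π = ψ)
    (g : Y → (Fin n → ℝ)) (hg : Measurable g)
    (hgK : ∀ y : Y, (g y, (y : Fin p → ℝ)) ∈ K)
    {F : (Fin n → ℝ) × (Fin p → ℝ) → ℝ} (hF : Continuous F)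
    (hmin : ∀ (y : Y) x, (x, (y : Fin p → ℝ)) ∈ K → F (g y, y) ≤ F (x, y))
    (huniq : ∀ᵐ y : Y ∂ψ, ∀ x, (x, (y : Fin p → ℝ)) ∈ K → F (x, y) = F (g y, y) → x = g y)
    (hle : ∫ w, F w.1 ∂μ ≤ ∫ y : Y, F (g y, (y : Fin p → ℝ)) ∂ψ)
    {q : (Fin n → ℝ) × (Fin p → ℝ) → ℝ} (hq : Continuous q) :
    ∫ w, q w.1 ∂μ = ∫ y : Y, q (g y, (y : Fin p → ℝ)) ∂ψ := by
  have hgm : Measurable (fun y : Y => (g y, (y : Fin p → ℝ))) := hg.prodMk measurable_subtype_coe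
  have htr : ∀ {r : (Fin n → ℝ) × (Fin p → ℝ) → ℝ}, Continuous r →
      ∫ y : Y, r (g y, (y : Fin p → ℝ)) ∂ψ = ∫ w, r (g (π w), π w) ∂μ := by
    intro r hr
    rw [← hμ, integral_map hπ.aemeasurable]
    exact (hr.measurable.comp hgm).aestronglyMeasurable
  have hweq : ∀ w : K, w.1 = (w.1.1, (π w : Fin p → ℝ)) := fun w => by rw [hπ2]
  have hi1 : Integrable (fun w : K => F w.1) μ :=
    integrable_sel hK μ hF measurable_subtype_coe (fun w => w.2)
  have hi2 : Integrable (fun w : K => F (g (π w), π w)) μ :=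
    integrable_sel hK μ hF (hgm.comp hπ) (fun w => hgK _)
  have hnn : ∀ w : K, 0 ≤ F w.1 - F (g (π w), π w) := by
    intro w
    have := hmin (π w) w.1.1 (by rw [← hweq]; exact w.2)
    rw [← hweq] at this
    linarith
  have hz : ∫ w, (F w.1 - F (g (π w), π w)) ∂μ = 0 := by
    apply le_antisymm
    · rw [integral_sub hi1 hi2, ← htr hF]; linarith
    · exact integral_nonneg hnn
  rw [integral_eq_zero_iff_of_nonneg hnn (hi1.sub hi2)] at hz
  rw [← hμ] at huniq
  have hu := ae_of_ae_map hπ.aemeasurable huniq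
  rw [htr hq]
  apply integral_congr_ae
  filter_upwards [hz, hu] with w h1 h2
  have h1' : F w.1 - F (g (π w), π w) = 0 := h1
  have := h2 w.1.1 (by rw [← hweq]; exact w.2) (by rw [← hweq]; linarith)
  rw [← this, ← hweq]

theorem measure_eq_of_moments {p : ℕ} {Y : Set (Fin p → ℝ)} (hY : IsCompact Y)
    (μ ν : Measure Y) [IsFiniteMeasure μ] [IsFiniteMeasure ν]
    (h : ∀ q : MvPolynomial (Fin p) ℝ, ∫ y, eval (y : Fin p → ℝ) q ∂μ = ∫ y, eval (y : Fin p → ℝ) q ∂ν) :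
    μ = ν := by
  have : CompactSpace Y := isCompact_iff_compactSpace.1 hY
  let coord : Fin p → BoundedContinuousFunction Y ℝ := fun l =>
    BoundedContinuousFunction.mkOfCompact ⟨fun y : Y => (y : Fin p → ℝ) l, (continuous_apply l).comp continuous_subtype_val⟩
  let ev : MvPolynomial (Fin p) ℝ →ₐ[ℝ] BoundedContinuousFunction Y ℝ := aeval coord
  have hev : ∀ q y, ev q y = eval (y : Fin p → ℝ) q := by
    intro q y
    induction q using MvPolynomial.induction_on with
    | C r => simp [ev]
    | add a b ha hb => simp [ha, hb]
    | mul_X a i ha => simp only [map_mul, BoundedContinuousFunction.coe_mul, Pi.mul_apply, ha]; simp [ev, coord]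
  let A : StarSubalgebra ℝ (BoundedContinuousFunction Y ℝ) :=
    { ev.range with
      star_mem' := by
        intro a ha
        have : star a = a := by ext y; simp
        rw [this]; exact ha }
  have hA : ∀ q, ev q ∈ A := fun q => ⟨q, rfl⟩
  refine ext_of_forall_mem_subalgebra_integral_eq_of_pseudoEMetric_complete_countable (𝕜 := ℝ) (A := A) ?_ ?_
  · intro y y' hne
    have : ∃ l, (y : Fin p → ℝ) l ≠ (y' : Fin p → ℝ) l := by
      by_contra! hc
      exact hne (Subtype.ext (funext hc))
    obtain ⟨l, hl⟩ := this
    refine ⟨ev (X l), ⟨_, ⟨ev (X l), hA _, rfl⟩, rfl⟩, ?_⟩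
    rw [hev, hev]
    simpa using hl
  · rintro _ ⟨q, rfl⟩
    have := h q
    simp only [← hev] at this
    exact this

/-- convergence of the moments of nearly optimal solutions of the SDP
relaxations to the moments of `y ↦ (g(y), y)` for a measurable selector `g` of optimal
solutions. -/
theorem stmt12 (n p m s : ℕ)
    (f : MvPolynomial (Fin n ⊕ Fin p) ℝ)
    (hx : Fin m → MvPolynomial (Fin n ⊕ Fin p) ℝ)
    (hy : Fin s → MvPolynomial (Fin p) ℝ)
    (H : Fin m ⊕ Fin s → MvPolynomial (Fin n ⊕ Fin p) ℝ)
    (hH : H = Sum.elim hx (fun k => rename Sum.inr (hy k)))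
    (Y : Set (Fin p → ℝ)) (hYdef : Y = {y | ∀ k, 0 ≤ eval y (hy k)}) (hYc : IsCompact Y)
    (K : Set ((Fin n → ℝ) × (Fin p → ℝ)))
    (hKdef : K = {w | w.2 ∈ Y ∧ ∀ j, 0 ≤ evalXY n p (hx j) w}) (hKc : IsCompact K)
    (Ky : (Fin p → ℝ) → Set (Fin n → ℝ))
    (hKy : ∀ y, Ky y = {x | ∀ j, 0 ≤ eval (Sum.elim x y) (hx j)})
    (hne : ∀ y ∈ Y, (Ky y).Nonempty)
    (harch : ArchimedeanQM n p H)
    (φ : Measure (Fin p → ℝ)) [IsProbabilityMeasure φ] (hφY : φ Yᶜ = 0)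
    (γ : (Fin p → ℕ) → ℝ)
    (hγ : ∀ β, γ β = ∫ y in Y, ∏ l, y l ^ β l ∂φ)
    (J : (Fin p → ℝ) → ℝ)
    (hJ : ∀ y, J y = sInf ((fun x => evalXY n p f (x, y)) '' Ky y))
    (Xstar : (Fin p → ℝ) → Set (Fin n → ℝ))
    (hXs : ∀ y, Xstar y = {x ∈ Ky y | evalXY n p f (x, y) = J y})
    (xstar : (Fin p → ℝ) → (Fin n → ℝ))
    (hxu : ∀ᵐ y ∂φ, Xstar y = {xstar y})
    (zi : ℕ → (Fin n → ℕ) → (Fin p → ℕ) → ℝ)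
    (hzi : ∀ i, iZero n p H f ≤ i →
      RelaxFeasible n p H γ i (zi i) ∧
      Lz n p (zi i) f ≤ rhoSDP n p H γ f i + 1 / (i : ℝ)) :
    ∃ g : (Fin p → ℝ) → (Fin n → ℝ),
      Measurable (fun y : Y => g y.1) ∧
      (∀ y ∈ Y, g y ∈ Ky y ∧ J y = evalXY n p f (g y, y)) ∧
      (∀ (α : Fin n → ℕ) (β : Fin p → ℕ),
        Tendsto (fun i => zi i α β) atTop
          (𝓝 (∫ y in Y, (∏ l, y l ^ β l) * ∏ k, g y k ^ α k ∂φ))) ∧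
      (∀ (k : Fin n) (β : Fin p → ℕ),
        Tendsto (fun i => zi i (fun j => if j = k then 1 else 0) β) atTop
          (𝓝 (∫ y in Y, (∏ l, y l ^ β l) * g y k ∂φ))) := by
  classical
  have hYm : MeasurableSet Y := hYc.isClosed.measurableSet
  have hKmem : ∀ w : (Fin n → ℝ) × (Fin p → ℝ), w ∈ K ↔ ∀ j, 0 ≤ eval (Sum.elim w.1 w.2) (H j) := by
    intro w
    rw [hKdef, hYdef, hH]
    simp only [mem_setOf_eq, Sum.forall, Sum.elim_inl, Sum.elim_inr, evalXY, eval_rename,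
      Sum.elim_comp_inr]
    exact and_comm
  have hKKy : ∀ y ∈ Y, ∀ x, (x, y) ∈ K ↔ x ∈ Ky y := by
    intro y hy' x
    rw [hKdef, hKy]
    simp [hy', evalXY]
  have hKY : ∀ w ∈ K, w.2 ∈ Y := by
    intro w hw
    rw [hKdef] at hw
    exact hw.1
  set F := evalXY n p f with hFdef
  have hF : Continuous F := continuous_evalXY f
  obtain ⟨g, hg, hgmin⟩ := exists_selection K hKc Y (fun y hy' => by
    obtain ⟨x, hx'⟩ := hne y hy'
    exact ⟨x, (hKKy y hy' x).2 hx'⟩) F hF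
  have hgK : ∀ y : Y, (g y, (y : Fin p → ℝ)) ∈ K := fun y => (hgmin y).1
  have hJg : ∀ y : Y, J y = F (g y, (y : Fin p → ℝ)) := by
    intro y
    rw [hJ]
    apply IsLeast.csInf_eq
    refine ⟨⟨g y, (hKKy y y.2 _).1 (hgK y), rfl⟩, ?_⟩
    rintro _ ⟨x, hx', rfl⟩
    exact (hgmin y).2 x ((hKKy y y.2 x).2 hx')
  let ψ : Measure Y := φ.comap Subtype.val
  have hψmap : ψ.map Subtype.val = φ := by
    rw [map_comap_subtype_coe hYm]
    exact Measure.restrict_eq_self_of_ae_mem (by rw [ae_iff]; exact hφY)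
  have hψp : IsProbabilityMeasure ψ := by
    refine ⟨?_⟩
    have h1 : φ univ = 1 := measure_univ
    rw [← hψmap, Measure.map_apply measurable_subtype_coe MeasurableSet.univ] at h1
    simpa using h1
  have hint : ∀ r : (Fin p → ℝ) → ℝ, ∫ y in Y, r y ∂φ = ∫ y : Y, r y ∂ψ := fun r =>
    (integral_subtype_comap hYm r).symm
  have hgm : Measurable (fun y : Y => (g y, (y : Fin p → ℝ))) := hg.prodMk measurable_subtype_coe
  have hintq : ∀ q, Integrable (fun y : Y => evalXY n p q (g y, (y : Fin p → ℝ))) ψ := fun q =>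
    integrable_sel hKc ψ (continuous_evalXY q) hgm hgK
  -- moments of the graph
  let z0 : (Fin n → ℕ) → (Fin p → ℕ) → ℝ := fun α β =>
    ∫ y : Y, (∏ l, (y : Fin p → ℝ) l ^ β l) * ∏ k, g y k ^ α k ∂ψ
  have hevm : ∀ (d : (Fin n ⊕ Fin p) →₀ ℕ) (c : ℝ) (w : (Fin n → ℝ) × (Fin p → ℝ)),
      evalXY n p (monomial d c) w =
        c * ((∏ l, w.2 l ^ d (Sum.inr l)) * ∏ k, w.1 k ^ d (Sum.inl k)) := by
    intro d c w
    rw [evalXY, eval_monomial, Finsupp.prod_fintype _ _ (by simp), Fintype.prod_sum_type]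
    simp only [Sum.elim_inl, Sum.elim_inr]
    ring
  have hz0 : ∀ q, LzLin z0 q = ∫ y : Y, evalXY n p q (g y, (y : Fin p → ℝ)) ∂ψ := by
    intro q
    induction q using MvPolynomial.induction_on' with
    | monomial d c =>
      rw [LzLin_monomial]
      simp only [hevm, integral_const_mul]
      rfl
    | add a b ha hb =>
      rw [map_add, ha, hb, ← integral_add (hintq _) (hintq _)]
      simp [evalXY]
  have hz0f : ∀ i, RelaxFeasible n p H γ i z0 := by
    intro i
    refine ⟨fun q _ => ?_, fun j q _ => ?_, fun β _ => ?_⟩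
    · rw [Lz_eq, hz0]
      refine integral_nonneg fun y => ?_
      simp only [evalXY, map_pow]
      positivity
    · rw [Lz_eq, hz0]
      refine integral_nonneg fun y => ?_
      have := (hKmem _).1 (hgK y) j
      simp only [evalXY, map_pow, map_mul]
      exact mul_nonneg this (sq_nonneg _)
    · rw [hγ, hint]
      simp [z0]
  have hγ0 : γ (fun _ => 0) = 1 := by
    rw [hγ, hint]; simp
  have hfz : ∀ i z, RelaxFeasible n p H γ i z → z (fun _ => 0) (fun _ => 0) = 1 := by
    intro i z hz
    rw [hz.2.2 _ (by simp), hγ0]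
  have hLC : ∀ i z, RelaxFeasible n p H γ i z → ∀ c : ℝ, LzLin z (C c) = c := by
    intro i z hz c
    rw [← monomial_zero', LzLin_monomial]
    change c * z (fun _ => 0) (fun _ => 0) = c
    rw [hfz i z hz, mul_one]
  -- Archimedean property
  have harch' : ∀ a, ∃ k : ℝ, algebraMap ℝ (MvPolynomial (Fin n ⊕ Fin p) ℝ) k - a ∈
      (QMset H : Set (MvPolynomial (Fin n ⊕ Fin p) ℝ)) := by
    obtain ⟨N, σ0, σ, h0, hσ, heq⟩ := harch
    refine QM_arch _ (QMset_isQM H) N ?_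
    rw [heq]
    refine (QMset_isQM H).add ((QMset_isQM H).sos h0) ?_
    exact (QMset H).sum_mem (fun j _ => (QMset_isQM H).sos_mul (hσ j) (QMset_gen H j))
  have hub : ∀ q, ∃ k : ℝ, ∃ i1, ∀ i ≥ i1, ∀ z, RelaxFeasible n p H γ i z → LzLin z q ≤ k := by
    intro q
    obtain ⟨k, hk⟩ := harch' q
    obtain ⟨i1, h1⟩ := QM_eventually H γ hk
    refine ⟨k, i1, fun i hi z hz => ?_⟩
    have := h1 i hi z hz
    rw [map_sub, MvPolynomial.algebraMap_eq, hLC i z hz] at this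
    linarith
  -- bound for rho
  have hrho : ∀ᶠ i in atTop, LzLin (zi i) f ≤ ∫ y : Y, F (g y, (y : Fin p → ℝ)) ∂ψ + 1 / (i : ℝ) := by
    obtain ⟨k, i1, h1⟩ := hub (-f)
    filter_upwards [eventually_ge_atTop i1, eventually_ge_atTop (iZero n p H f)] with i hi hi0
    have h2 := (hzi i hi0).2
    rw [Lz_eq] at h2
    have h3 : rhoSDP n p H γ f i ≤ ∫ y : Y, F (g y, (y : Fin p → ℝ)) ∂ψ := by
      apply csInf_le
      · refine ⟨-k, ?_⟩
        rintro _ ⟨z, hz, rfl⟩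
        have := h1 i hi z hz
        rw [map_neg] at this
        rw [Lz_eq]; linarith
      · exact ⟨z0, hz0f i, by rw [Lz_eq, hz0]⟩
    linarith
  have hfeas : ∀ᶠ i in atTop, RelaxFeasible n p H γ i (zi i) := by
    filter_upwards [eventually_ge_atTop (iZero n p H f)] with i hi0
    exact (hzi i hi0).1
  have huniq : ∀ᵐ y : Y ∂ψ, ∀ x, (x, (y : Fin p → ℝ)) ∈ K →
      F (x, (y : Fin p → ℝ)) = F (g y, (y : Fin p → ℝ)) → x = g y := by
    rw [← hψmap] at hxu
    filter_upwards [ae_of_ae_map measurable_subtype_coe.aemeasurable hxu] with y hy' x hxK hxF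
    have key : ∀ x, (x, (y : Fin p → ℝ)) ∈ K →
      F (x, (y : Fin p → ℝ)) = F (g y, (y : Fin p → ℝ)) → x = xstar y := by
      intro x hxK hxF
      have : x ∈ Xstar y := by
        rw [hXs]
        exact ⟨(hKKy y y.2 x).1 hxK, by rw [hJg]; exact hxF⟩
      rw [hy'] at this
      exact this
    rw [key x hxK hxF, key (g y) (hgK y) rfl]
  -- the main convergence
  have main : ∀ q, Tendsto (fun i => LzLin (zi i) q) atTop (𝓝 (LzLin z0 q)) := by
    have : CompactSpace K := isCompact_iff_compactSpace.1 hKc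
    suffices hU : ∀ U : Ultrafilter ℕ, (U : Filter ℕ) ≤ atTop → ∀ q,
        Tendsto (fun i => LzLin (zi i) q) U (𝓝 (LzLin z0 q)) by
      intro q
      rw [tendsto_iff_ultrafilter]
      intro U hUa
      exact hU U hUa q
    intro U hUa
    have hlim : ∀ q, ∃ ℓ, Tendsto (fun i => LzLin (zi i) q) U (𝓝 ℓ) := by
      intro q
      obtain ⟨k, i1, h1⟩ := hub q
      obtain ⟨k', i2, h2⟩ := hub (-q)
      have hev : ∀ᶠ i in (U : Filter ℕ), LzLin (zi i) q ∈ Icc (-k') k := by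
        apply hUa
        filter_upwards [hfeas, eventually_ge_atTop i1, eventually_ge_atTop i2] with i hi h3 h4
        have h5 := h2 i h4 _ hi
        rw [map_neg] at h5
        exact ⟨by linarith, h1 i h3 _ hi⟩
      obtain ⟨ℓ, -, hℓ⟩ := (isCompact_Icc (a := -k') (b := k)).ultrafilter_le_nhds'
        (U.map (fun i => LzLin (zi i) q)) hev
      exact ⟨ℓ, hℓ⟩
    choose L0 hL0 using hlim
    let L : MvPolynomial (Fin n ⊕ Fin p) ℝ →ₗ[ℝ] ℝ :=
      { toFun := L0
        map_add' := fun a b => tendsto_nhds_unique (hL0 (a + b))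
          (by simpa only [map_add] using (hL0 a).add (hL0 b))
        map_smul' := fun c a => tendsto_nhds_unique (hL0 (c • a))
          (by simpa only [map_smul, RingHom.id_apply] using (hL0 a).const_smul c) }
    have hL : ∀ q, Tendsto (fun i => LzLin (zi i) q) U (𝓝 (L q)) := hL0
    have hLQ : ∀ q ∈ QMset H, 0 ≤ L q := by
      intro q hq
      obtain ⟨i1, h1⟩ := QM_eventually H γ hq
      refine ge_of_tendsto (hL q) (hUa ?_)
      filter_upwards [hfeas, eventually_ge_atTop i1] with i hi h3
      exact h1 i h3 _ hi
    have hLf : L f ≤ ∫ y : Y, F (g y, (y : Fin p → ℝ)) ∂ψ := by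
      have h1 : Tendsto (fun i : ℕ => ∫ y : Y, F (g y, (y : Fin p → ℝ)) ∂ψ + 1 / (i : ℝ)) U
          (𝓝 (∫ y : Y, F (g y, (y : Fin p → ℝ)) ∂ψ + 0)) :=
        (tendsto_const_nhds.add tendsto_one_div_atTop_nhds_zero_nat).mono_left hUa
      rw [add_zero] at h1
      exact le_of_tendsto_of_tendsto (hL f) h1 (hUa hrho)
    let ev : MvPolynomial (Fin n ⊕ Fin p) ℝ →ₗ[ℝ] C(K, ℝ) :=
      { toFun := fun q => ⟨fun w => evalXY n p q w.1, (continuous_evalXY q).comp continuous_subtype_val⟩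
        map_add' := fun a b => by ext w; simp [evalXY]
        map_smul' := fun c a => by ext w; simp [evalXY] }
    obtain ⟨μ, hμf, hμ⟩ := exists_measure ev 1 (by ext w; simp [ev, evalXY]) L (by
      intro q hq
      refine nonneg_of_QM H harch' L hLQ q ?_
      intro w hw
      have e : Sum.elim (fun k => w (Sum.inl k)) (fun l => w (Sum.inr l)) = w := by
        ext i; rcases i with i | i <;> rfl
      have hwK : ((fun k => w (Sum.inl k)), (fun l => w (Sum.inr l))) ∈ K := by
        rw [hKmem]; simp only [e]; exact hw
      have := hq ⟨_, hwK⟩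
      change 0 ≤ eval (Sum.elim (fun k => w (Sum.inl k)) (fun l => w (Sum.inr l))) q at this
      rwa [e] at this)
    have hμ' : ∀ q, ∫ w : K, evalXY n p q w.1 ∂μ = L q := hμ
    let π : K → Y := fun w => ⟨w.1.2, hKY _ w.2⟩
    have hπ : Measurable π := (measurable_snd.comp measurable_subtype_coe).subtype_mk
    have hLy : ∀ r : MvPolynomial (Fin p) ℝ, L (rename Sum.inr r) = ∫ y : Y, eval (y : Fin p → ℝ) r ∂ψ := by
      intro r
      have h1 : L (rename Sum.inr r) = LzLin z0 (rename Sum.inr r) := by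
        induction r using MvPolynomial.induction_on' with
        | monomial d c =>
          have e1 : (fun k : Fin n => (Finsupp.mapDomain Sum.inr d : (Fin n ⊕ Fin p) →₀ ℕ) (Sum.inl k))
              = fun _ => 0 := by
            ext k
            exact Finsupp.mapDomain_notin_range _ _ (by simp)
          refine tendsto_nhds_unique (hL _) (tendsto_const_nhds.congr' (hUa ?_))
          have hdeg := eventually_ge_atTop
            (∑ l : Fin p, (Finsupp.mapDomain Sum.inr d : (Fin n ⊕ Fin p) →₀ ℕ) (Sum.inr l))
          filter_upwards [hfeas, hdeg] with i hi hd
          rw [rename_monomial, LzLin_monomial, LzLin_monomial, e1, hi.2.2 _ (by omega),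
            (hz0f i).2.2 _ (by omega)]
        | add a b ha hb => rw [map_add, map_add, map_add, ha, hb]
      rw [h1, hz0]
      simp [evalXY, eval_rename]
    have hmap : μ.map π = ψ := by
      refine measure_eq_of_moments hYc _ _ (fun r => ?_)
      have hm : AEStronglyMeasurable (fun y : Y => eval (y : Fin p → ℝ) r) (μ.map π) :=
        ((MvPolynomial.continuous_eval r).measurable.comp measurable_subtype_coe).aestronglyMeasurable
      rw [integral_map hπ.aemeasurable hm, ← hLy, ← hμ']
      simp [evalXY, eval_rename, π]
    have hfin : ∀ q, L q = LzLin z0 q := by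
      intro q
      rw [← hμ', hz0]
      refine integral_graph hKc π hπ (fun _ => rfl) μ ψ hmap g hg hgK hF
        (fun y x hx' => (hgmin y).2 x hx') huniq ?_ (continuous_evalXY q)
      rw [hFdef, hμ']; exact hLf
    intro q
    rw [← hfin]; exact hL q
  have main2 : ∀ α β, Tendsto (fun i => zi i α β) atTop (𝓝 (z0 α β)) := by
    intro α β
    have := main (monomial (Finsupp.equivFunOnFinite.symm (Sum.elim α β)) 1)
    simp only [LzLin_monomial, one_mul] at this
    exact this
  refine ⟨fun y => if hy' : y ∈ Y then g ⟨y, hy'⟩ else 0, ?_, ?_, ?_, ?_⟩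
  · convert hg using 1
    ext y; simp
  · intro y hy'
    simp only [hy', dif_pos]
    exact ⟨(hKKy y hy' _).1 (hgK ⟨y, hy'⟩), hJg ⟨y, hy'⟩⟩
  · intro α β
    rw [hint]
    convert main2 α β using 2
    simp [z0]
  · intro k β
    rw [hint]
    convert main2 (fun j => if j = k then 1 else 0) β using 2
    simp [z0]
end
end

section
/- Under the polynomial parametric setting and the Archimedean assumption, assume K_y is nonempty for every y ∈ Y. For each i ≥ i_0 let (p_i, (σ^i_j)) be a nearly optimal feasible solution of the i-th dual semidefinite relaxation with ∫_Y p_i dφ ≥ ρ*_i − 1/i. Then p_i(y) ≤ J(y) for every y ∈ Y, lim_{i→∞} ∫_Y (J(y) − p_i(y)) dφ(y) = 0, and, defining p̃_0 := p_0 and p̃_i(y) := max(p̃_{i−1}(y), p_i(y)), the sequence p̃_i converges to J almost uniformly on Y with respect to φ. -/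
open MeasureTheory MvPolynomial Filter Topology Set

noncomputable section

/-- Optimal value `ρ*_i` of the `i`-th dual semidefinite relaxation. -/
def rhoSDPdual (n p : ℕ) {ι : Type*} [Fintype ι]
    (H : ι → MvPolynomial (Fin n ⊕ Fin p) ℝ)
    (f : MvPolynomial (Fin n ⊕ Fin p) ℝ)
    (Y : Set (Fin p → ℝ)) (φ : Measure (Fin p → ℝ)) (i : ℕ) : ℝ :=
  sSup {r | ∃ (pol : MvPolynomial (Fin p) ℝ)
      (σ0 : MvPolynomial (Fin n ⊕ Fin p) ℝ)
      (σ : ι → MvPolynomial (Fin n ⊕ Fin p) ℝ),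
    IsSumSq σ0 ∧ (∀ j, IsSumSq (σ j)) ∧
    f - rename Sum.inr pol = σ0 + ∑ j, σ j * H j ∧
    pol.totalDegree ≤ 2 * i ∧ σ0.totalDegree ≤ 2 * i ∧
    (∀ j, (σ j * H j).totalDegree ≤ 2 * i) ∧
    r = ∫ y in Y, eval y pol ∂φ}


structure QMod {A : Type*} [CommRing A] [Algebra ℝ A] (Q : Set A) : Prop where
  one_mem : (1 : A) ∈ Q
  add_mem : ∀ a ∈ Q, ∀ b ∈ Q, a + b ∈ Q
  sq_mul : ∀ c : A, ∀ a ∈ Q, c * c * a ∈ Q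

namespace QMod
variable {A : Type*} [CommRing A] [Algebra ℝ A] {Q : Set A}

theorem zero_mem (h : QMod Q) : (0 : A) ∈ Q := by
  simpa using h.sq_mul 0 1 h.one_mem

theorem sos_mul (h : QMod Q) {s : A} (hs : IsSumSq s) : ∀ a ∈ Q, s * a ∈ Q := by
  induction hs with
  | zero => intro a _; simpa using h.zero_mem
  | sq_add c _ ih =>
    intro a ha
    rw [add_mul]
    exact h.add_mem _ (h.sq_mul _ _ ha) _ (ih a ha)

theorem sos_mem (h : QMod Q) {s : A} (hs : IsSumSq s) : s ∈ Q := by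
  simpa using h.sos_mul hs 1 h.one_mem

theorem smul_mem (h : QMod Q) {r : ℝ} (hr : 0 ≤ r) {a : A} (ha : a ∈ Q) :
    algebraMap ℝ A r * a ∈ Q := by
  have := h.sq_mul (algebraMap ℝ A (Real.sqrt r)) a ha
  rwa [← map_mul, Real.mul_self_sqrt hr] at this

theorem const_mem (h : QMod Q) {r : ℝ} (hr : 0 ≤ r) : algebraMap ℝ A r ∈ Q := by
  simpa using h.smul_mem hr h.one_mem

/-- key identity -/
theorem sq_bound (h : QMod Q) {r : ℝ} (hr : 0 < r) {a : A}
    (h1 : algebraMap ℝ A r + a ∈ Q) (h2 : algebraMap ℝ A r - a ∈ Q) :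
    algebraMap ℝ A (r ^ 2) - a * a ∈ Q := by
  have h3 := h.smul_mem (r := 1 / (2 * r)) (by positivity)
    (h.add_mem _ (h.sq_mul (algebraMap ℝ A r + a) _ h2) _
      (h.sq_mul (algebraMap ℝ A r - a) _ h1))
  convert h3 using 1
  have h4 : algebraMap ℝ A (1 / (2 * r)) * (2 * algebraMap ℝ A r) = 1 := by
    rw [← map_ofNat (algebraMap ℝ A) 2, ← map_mul, ← map_mul]
    rw [show 1 / (2 * r) * (2 * r) = 1 by field_simp, map_one]
  have : algebraMap ℝ A (r ^ 2) - a * a = (algebraMap ℝ A r * algebraMap ℝ A r - a * a) * 1 := by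
    rw [map_pow]; ring
  rw [this, ← h4]
  ring

/-- adjoin an element -/
def adj (Q : Set A) (a : A) : Set A := {x | ∃ q ∈ Q, ∃ s, IsSumSq s ∧ x = q + s * a}

theorem adj_qmod (h : QMod Q) (a : A) : QMod (adj Q a) where
  one_mem := ⟨1, h.one_mem, 0, IsSumSq.zero, by simp⟩
  add_mem := by
    rintro _ ⟨q, hq, s, hs, rfl⟩ _ ⟨q', hq', s', hs', rfl⟩
    exact ⟨q + q', h.add_mem _ hq _ hq', s + s', hs.add hs', by ring⟩
  sq_mul := by
    rintro c _ ⟨q, hq, s, hs, rfl⟩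
    exact ⟨c * c * q, h.sq_mul _ _ hq, c * c * s, (IsSumSq.mul_self c).mul hs, by ring⟩

theorem subset_adj (a : A) : Q ⊆ adj Q a := fun q hq => ⟨q, hq, 0, IsSumSq.zero, by simp⟩

theorem mem_adj (h : QMod Q) (a : A) : a ∈ adj Q a :=
  ⟨0, h.zero_mem, 1, by simpa using IsSumSq.mul_self (1 : A), by simp⟩

theorem quarter : ∀ b a : A, b * a = algebraMap ℝ A (1/4) *
    ((b + 1) * (b + 1) * a + (b - 1) * (b - 1) * (-a)) := by
  intro b a
  have h4 : algebraMap ℝ A (1 / 4) * 4 = 1 := by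
    rw [← map_ofNat (algebraMap ℝ A) 4, ← map_mul]; norm_num
  have : b * a = b * a * (algebraMap ℝ A (1 / 4) * 4) := by rw [h4, mul_one]
  rw [this]; ring

theorem ideal_mul (h : QMod Q) {a : A} (h1 : a ∈ Q) (h2 : -a ∈ Q) (b : A) : b * a ∈ Q := by
  rw [quarter]
  exact h.smul_mem (by norm_num) (h.add_mem _ (h.sq_mul _ _ h1) _ (h.sq_mul _ _ h2))

theorem exists_max (h : QMod Q) (hn : (-1 : A) ∉ Q) :
    ∃ P, Q ⊆ P ∧ QMod P ∧ (-1 : A) ∉ P ∧ ∀ a, a ∈ P ∨ -a ∈ P := by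
  obtain ⟨P, hQP, hP⟩ := zorn_subset_nonempty {P : Set A | QMod P ∧ (-1 : A) ∉ P} (by
    intro c hc hch hne
    refine ⟨⋃₀ c, ⟨⟨?_, ?_, ?_⟩, ?_⟩, fun s hs => subset_sUnion_of_mem hs⟩
    · obtain ⟨s, hs⟩ := hne
      exact ⟨s, hs, (hc hs).1.one_mem⟩
    · rintro a ⟨s, hs, ha⟩ b ⟨t, ht, hb⟩
      rcases hch.total hs ht with hst | hst
      · exact ⟨t, ht, (hc ht).1.add_mem _ (hst ha) _ hb⟩
      · exact ⟨s, hs, (hc hs).1.add_mem _ ha _ (hst hb)⟩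
    · rintro x a ⟨s, hs, ha⟩
      exact ⟨s, hs, (hc hs).1.sq_mul _ _ ha⟩
    · rintro ⟨s, hs, ha⟩
      exact (hc hs).2 ha) Q ⟨h, hn⟩
  have hq := hP.prop.1
  refine ⟨P, hQP, hq, hP.prop.2, ?_⟩
  intro a
  by_contra hcon
  push Not at hcon
  have key : ∀ b, b ∉ P → (-1 : A) ∈ adj P b := by
    intro b hb
    by_contra hb'
    have := hP.le_of_ge (y := adj P b) ⟨adj_qmod hq b, hb'⟩ (subset_adj b)
    exact hb (this (mem_adj hq b))
  obtain ⟨q1, hq1, s1, hs1, e1⟩ := key a hcon.1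
  obtain ⟨q2, hq2, s2, hs2, e2⟩ := key (-a) hcon.2
  have hneg : -(s1 + s2) ∈ P := by
    have := hq.add_mem _ (hq.sos_mul hs2 _ hq1) _ (hq.sos_mul hs1 _ hq2)
    convert this using 1
    linear_combination s2 * e1 + s1 * e2
  have hs1n : -s1 ∈ P := by
    have := hq.add_mem _ hneg _ (hq.sos_mem hs2)
    convert this using 1; ring
  have : a * s1 ∈ P := hq.ideal_mul (hq.sos_mem hs1) hs1n a
  apply hP.prop.2
  rw [e1, mul_comm s1]
  exact hq.add_mem _ hq1 _ this

/-- Archimedean quadratic modules -/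
def Arch (Q : Set A) : Prop := ∀ a : A, ∃ N : ℝ, algebraMap ℝ A N - a ∈ Q

theorem exists_hom (h : QMod Q) (hn : (-1 : A) ∉ Q) (harch : Arch Q) :
    ∃ α : A →ₐ[ℝ] ℝ, ∀ a ∈ Q, 0 ≤ α a := by
  obtain ⟨P, hQP, hP, hnP, htot⟩ := exists_max h hn
  have hneg : ∀ r : ℝ, algebraMap ℝ A r ∈ P → 0 ≤ r := by
    intro r hr
    by_contra hlt
    push Not at hlt
    apply hnP
    have hr0 : r ≠ 0 := hlt.ne
    have := hP.smul_mem (r := 1 / (-r)) (by have : 0 < -r := by linarith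
                                            positivity) hr
    rw [← map_mul, show 1 / (-r) * r = -1 by rw [div_mul_eq_mul_div, one_mul, div_neg, div_self hr0]] at this
    simpa using this
  have hex : ∀ a : A, ∃ t : ℝ, ∀ ε > 0, algebraMap ℝ A (ε + t) - a ∈ P ∧
      a - algebraMap ℝ A (t - ε) ∈ P := by
    intro a
    let D : Set ℝ := {r | a - algebraMap ℝ A r ∈ P}
    have hDne : D.Nonempty := by
      obtain ⟨N, hN⟩ := harch (-a)
      refine ⟨-N, hQP ?_⟩
      convert hN using 1
      rw [map_neg]; ring
    have hDb : BddAbove D := by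
      obtain ⟨N, hN⟩ := harch a
      refine ⟨N, fun r hr => ?_⟩
      have := hneg (N - r) (by
        convert hP.add_mem _ (hQP hN) _ hr using 1
        rw [map_sub]; ring)
      linarith
    refine ⟨sSup D, fun ε hε => ⟨?_, ?_⟩⟩
    · rcases htot (algebraMap ℝ A (ε + sSup D) - a) with h1 | h1
      · exact h1
      · have : ε + sSup D ∈ D := by simpa [D] using h1
        have := le_csSup hDb this
        linarith
    · obtain ⟨r, hr, hlt⟩ := exists_lt_of_lt_csSup hDne (show sSup D - ε < sSup D by linarith)
      have := hP.add_mem _ hr _ (hP.const_mem (r := r - (sSup D - ε)) (by linarith))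
      convert this using 1
      rw [map_sub _ r]; ring
  choose α hα using hex
  have huniq : ∀ a t, (∀ ε > 0, algebraMap ℝ A (ε + t) - a ∈ P ∧
      a - algebraMap ℝ A (t - ε) ∈ P) → α a = t := by
    intro a t ht
    apply le_antisymm
    · apply le_of_forall_pos_le_add
      intro ε hε
      have := hneg (ε / 2 + t - (α a - ε / 2)) (by
        convert hP.add_mem _ (ht (ε/2) (by linarith)).1 _ (hα a (ε/2) (by linarith)).2 using 1
        rw [map_sub _ (ε / 2 + t)]; ring)
      linarith
    · apply le_of_forall_pos_le_add
      intro ε hε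
      have := hneg (ε / 2 + α a - (t - ε / 2)) (by
        convert hP.add_mem _ (ht (ε/2) (by linarith)).2 _ (hα a (ε/2) (by linarith)).1 using 1
        rw [map_sub _ (ε / 2 + α a)]; ring)
      linarith
  have hnn : ∀ a ∈ P, 0 ≤ α a := by
    intro a ha
    apply le_of_forall_pos_le_add
    intro ε hε
    have := hneg (ε + α a) (by
      convert hP.add_mem _ (hα a ε hε).1 _ ha using 1
      ring)
    linarith
  have hconst : ∀ r : ℝ, α (algebraMap ℝ A r) = r := by
    intro r
    apply huniq
    intro ε hε
    rw [← map_sub, ← map_sub]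
    exact ⟨hP.const_mem (by linarith), hP.const_mem (by linarith)⟩
  have hadd : ∀ a b, α (a + b) = α a + α b := by
    intro a b
    apply huniq
    intro ε hε
    have ha := hα a (ε/2) (by linarith)
    have hb := hα b (ε/2) (by linarith)
    constructor
    · convert hP.add_mem _ ha.1 _ hb.1 using 1
      rw [show ε + (α a + α b) = (ε / 2 + α a) + (ε / 2 + α b) by ring, map_add _ (ε / 2 + α a)]
      ring
    · convert hP.add_mem _ ha.2 _ hb.2 using 1
      rw [show (α a + α b) - ε = (α a - ε / 2) + (α b - ε / 2) by ring, map_add _ (α a - ε / 2)]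
      ring
  have hnegα : ∀ a, α (-a) = - α a := by
    intro a
    have := hadd a (-a)
    have h0 := hconst 0
    rw [map_zero] at h0
    rw [add_neg_cancel, h0] at this
    linarith
  have hsmul : ∀ (r : ℝ) a, 0 ≤ r → α (algebraMap ℝ A r * a) = r * α a := by
    intro r a hr
    rcases hr.eq_or_lt with rfl | hr
    · have h0 := hconst 0
      rw [map_zero] at h0
      simp [h0]
    apply huniq
    intro ε hε
    have ha := hα a (ε / r) (by positivity)
    constructor
    · convert hP.smul_mem hr.le ha.1 using 1
      rw [mul_sub, ← map_mul]
      congr 2; field_simp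
    · convert hP.smul_mem hr.le ha.2 using 1
      rw [mul_sub, ← map_mul]
      congr 2; field_simp
  have hsq0 : ∀ a, α a = 0 → α (a * a) = 0 := by
    intro a h0
    apply huniq
    intro ε hε
    have ha := hα a (Real.sqrt ε) (by positivity)
    rw [h0] at ha
    constructor
    · have := hP.sq_bound (r := Real.sqrt ε) (by positivity) (a := a)
        (by convert ha.2 using 1; rw [zero_sub, map_neg]; ring)
        (by convert ha.1 using 1; rw [add_zero])
      rw [Real.sq_sqrt hε.le] at this
      simpa using this
    · have := hP.add_mem _ (hP.const_mem hε.le) _ (hP.sq_mul a 1 hP.one_mem)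
      convert this using 1
      rw [zero_sub, map_neg]; ring
  have hsq : ∀ a, α (a * a) = α a * α a := by
    intro a
    have h1 := hsq0 (a + algebraMap ℝ A (- α a)) (by rw [hadd, hconst]; ring)
    have : (a + algebraMap ℝ A (- α a)) * (a + algebraMap ℝ A (- α a)) + algebraMap ℝ A 2 * (
        (algebraMap ℝ A (α a)) * a) = a * a + algebraMap ℝ A (α a * α a) := by
      simp only [map_neg, map_mul, map_ofNat]; ring
    have h2 := congrArg α this
    rw [hadd, h1, hsmul _ _ (by norm_num), hadd, hconst] at h2
    have h3 : α (algebraMap ℝ A (α a) * a) = α a * α a := by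
      rcases le_total 0 (α a) with h | h
      · exact hsmul _ _ h
      · have := hsmul (-α a) a (by linarith)
        rw [map_neg, neg_mul, hnegα] at this
        linarith
    linarith
  have hmul : ∀ a b, α (a * b) = α a * α b := by
    intro a b
    have h1 := hsq (a + b)
    rw [show (a + b) * (a + b) = a * a + algebraMap ℝ A 2 * (a * b) + b * b by
      simp only [map_ofNat]; ring, hadd, hadd, hsq, hsq, hsmul _ _ (by norm_num), hadd] at h1
    linarith
  refine ⟨{ toFun := α
            map_one' := by simpa using hconst 1
            map_mul' := hmul
            map_zero' := by simpa using hconst 0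
            map_add' := hadd
            commutes' := by simpa using hconst }, fun a ha => hnn a (hQP ha)⟩

theorem putinar_abs (h : QMod Q) (harch : Arch Q) (f : A)
    (hf : ∀ α : A →ₐ[ℝ] ℝ, (∀ a ∈ Q, 0 ≤ α a) → 0 < α f) : f ∈ Q := by
  have h1 : (-1 : A) ∈ adj Q (-f) := by
    by_contra hcon
    obtain ⟨α, hα⟩ := exists_hom (adj_qmod h (-f)) hcon
      (fun a => (harch a).imp fun N hN => subset_adj _ hN)
    have h2 := hα _ (mem_adj h (-f))
    have h3 := hf α (fun a ha => hα a (subset_adj _ ha))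
    rw [map_neg] at h2
    linarith
  obtain ⟨q, hq, s, hs, e⟩ := h1
  have hmono : ∀ a (N N' : ℝ), N ≤ N' → algebraMap ℝ A N - a ∈ Q →
      algebraMap ℝ A N' - a ∈ Q := by
    intro a N N' hN ha
    have := h.add_mem _ ha _ (h.const_mem (sub_nonneg.2 hN))
    convert this using 1
    rw [map_sub]; ring
  obtain ⟨N1, hN1⟩ := harch s
  obtain ⟨N2, hN2⟩ := harch (s * s * f)
  obtain ⟨N3, hN3⟩ := harch (-f)
  let k : ℝ := max 1 (max (N1 / 2) ((N2 + 1) / 2))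
  have hk1 : 1 ≤ k := le_max_left _ _
  have hk2 : N1 / 2 ≤ k := (le_max_left _ _).trans (le_max_right _ _)
  have hk3 : (N2 + 1) / 2 ≤ k := (le_max_right _ _).trans (le_max_right _ _)
  have hb1 := hmono _ _ (2 * k) (by linarith) hN1
  have hb2 := hmono _ _ (2 * k - 1) (by linarith) hN2
  have hstep : ∀ r : ℝ, 0 ≤ r → f + algebraMap ℝ A r ∈ Q →
      f + algebraMap ℝ A (r - 1 / k ^ 2) ∈ Q := by
    intro r hr hfr
    have m1 := h.sq_mul (algebraMap ℝ A k - s) _ hfr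
    have m2 := h.smul_mem (r := 2 * k) (by linarith) hq
    have m3 := h.smul_mem hr (h.sos_mul hs _ hb1)
    have m4 := h.smul_mem (r := 1 / k ^ 2) (by positivity)
      (h.add_mem _ (h.add_mem _ (h.add_mem _ m1 _ m2) _ m3) _ hb2)
    convert m4 using 1
    have hkk : algebraMap ℝ A (1 / k ^ 2) * (algebraMap ℝ A k * algebraMap ℝ A k) = 1 := by
      rw [← map_mul, ← map_mul, show 1 / k ^ 2 * (k * k) = 1 by field_simp, map_one]
    have hq' : q = s * f - 1 := by linear_combination -e
    rw [hq']
    simp only [map_sub, map_mul, map_ofNat, map_one]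
    linear_combination (-f - algebraMap ℝ A r) * hkk
  by_contra hfQ
  have hall : ∀ j : ℕ, f + algebraMap ℝ A (max N3 0 - j * (1 / k ^ 2)) ∈ Q ∧
      0 ≤ max N3 0 - j * (1 / k ^ 2) := by
    have hpos : ∀ r : ℝ, f + algebraMap ℝ A r ∈ Q → 0 ≤ r := by
      intro r hr
      by_contra hlt
      push Not at hlt
      apply hfQ
      have := h.add_mem _ hr _ (h.const_mem (r := -r) (by linarith))
      convert this using 1
      rw [map_neg]; ring
    intro j
    induction j with
    | zero =>
      refine ⟨?_, by simp⟩
      have := hmono _ _ (max N3 0) (le_max_left _ _) hN3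
      convert this using 1
      simp; ring
    | succ j ih =>
      have := hstep _ ih.2 ih.1
      rw [show max N3 0 - j * (1 / k ^ 2) - 1 / k ^ 2 =
        max N3 0 - (j + 1 : ℕ) * (1 / k ^ 2) by push_cast; ring] at this
      exact ⟨this, hpos _ this⟩
  obtain ⟨j, hj⟩ := exists_nat_gt (max N3 0 * k ^ 2)
  have := (hall j).2
  have hk : 0 < k ^ 2 := by positivity
  have h5 : (j : ℝ) * (1 / k ^ 2) * k ^ 2 = j := by field_simp
  nlinarith

end QMod

/-- Putinar's Positivstellensatz. -/
theorem putinar {τ ι : Type*} [Fintype τ] [Fintype ι] (H : ι → MvPolynomial τ ℝ)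
    (harch : ∃ (N : ℝ) (σ0 : MvPolynomial τ ℝ) (σ : ι → MvPolynomial τ ℝ),
      IsSumSq σ0 ∧ (∀ j, IsSumSq (σ j)) ∧ C N - (∑ i : τ, X i ^ 2) = σ0 + ∑ j, σ j * H j)
    (g : MvPolynomial τ ℝ) (hg : ∀ w : τ → ℝ, (∀ j, 0 ≤ eval w (H j)) → 0 < eval w g) :
    ∃ (σ0 : MvPolynomial τ ℝ) (σ : ι → MvPolynomial τ ℝ),
      IsSumSq σ0 ∧ (∀ j, IsSumSq (σ j)) ∧ g = σ0 + ∑ j, σ j * H j := by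
  classical
  let Q : Set (MvPolynomial τ ℝ) := {g | ∃ (σ0 : MvPolynomial τ ℝ) (σ : ι → MvPolynomial τ ℝ),
      IsSumSq σ0 ∧ (∀ j, IsSumSq (σ j)) ∧ g = σ0 + ∑ j, σ j * H j}
  have hQ : QMod Q := by
    refine ⟨⟨1, 0, by simpa using IsSumSq.mul_self (1 : MvPolynomial τ ℝ),
      fun _ => IsSumSq.zero, by simp⟩, ?_, ?_⟩
    · rintro _ ⟨a, b, ha, hb, rfl⟩ _ ⟨c, d, hc, hd, rfl⟩
      refine ⟨a + c, b + d, ha.add hc, fun j => (hb j).add (hd j), ?_⟩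
      simp only [Pi.add_apply, add_mul, Finset.sum_add_distrib]
      ring
    · rintro e _ ⟨a, b, ha, hb, rfl⟩
      refine ⟨e * e * a, fun j => e * e * b j, (IsSumSq.mul_self e).mul ha,
        fun j => (IsSumSq.mul_self e).mul (hb j), ?_⟩
      rw [mul_add, Finset.mul_sum]
      simp only [mul_assoc]
  have hHQ : ∀ j, H j ∈ Q := by
    intro j
    refine ⟨0, Pi.single j 1, IsSumSq.zero, fun i => ?_, ?_⟩
    · by_cases h : i = j
      · subst h; simpa using IsSumSq.mul_self (1 : MvPolynomial τ ℝ)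
      · simp [Pi.single_eq_of_ne h, IsSumSq.zero]
    · simp [Pi.single_apply]
  have hA : QMod.Arch Q := by
    have hb : ∀ a : MvPolynomial τ ℝ, ∃ N : ℝ, 0 < N ∧
        algebraMap ℝ (MvPolynomial τ ℝ) N + a ∈ Q ∧ algebraMap ℝ (MvPolynomial τ ℝ) N - a ∈ Q := by
      have haddb : ∀ a b : MvPolynomial τ ℝ, (∃ N : ℝ, 0 < N ∧
          algebraMap ℝ (MvPolynomial τ ℝ) N + a ∈ Q ∧ algebraMap ℝ (MvPolynomial τ ℝ) N - a ∈ Q) →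
          (∃ N : ℝ, 0 < N ∧
          algebraMap ℝ (MvPolynomial τ ℝ) N + b ∈ Q ∧ algebraMap ℝ (MvPolynomial τ ℝ) N - b ∈ Q) →
          (∃ N : ℝ, 0 < N ∧ algebraMap ℝ (MvPolynomial τ ℝ) N + (a + b) ∈ Q ∧
            algebraMap ℝ (MvPolynomial τ ℝ) N - (a + b) ∈ Q) := by
        rintro a b ⟨N, hN, h1, h2⟩ ⟨N', hN', h3, h4⟩
        refine ⟨N + N', by positivity, ?_, ?_⟩
        · convert hQ.add_mem _ h1 _ h3 using 1
          rw [map_add]; ring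
        · convert hQ.add_mem _ h2 _ h4 using 1
          rw [map_add]; ring
      intro a
      induction a using MvPolynomial.induction_on with
      | C r =>
        refine ⟨|r| + 1, by positivity, ?_, ?_⟩
        · rw [← MvPolynomial.algebraMap_eq, ← map_add]
          exact hQ.const_mem (by linarith [neg_abs_le r])
        · rw [← MvPolynomial.algebraMap_eq, ← map_sub]
          exact hQ.const_mem (by linarith [le_abs_self r])
      | add a b iha ihb => exact haddb _ _ iha ihb
      | mul_X a i iha =>
        have hX : ∃ N : ℝ, 0 < N ∧ algebraMap ℝ (MvPolynomial τ ℝ) N + X i ∈ Q ∧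
            algebraMap ℝ (MvPolynomial τ ℝ) N - X i ∈ Q := by
          obtain ⟨N, σ0, σ, h0, hσ, e⟩ := harch
          have hm : C N - (∑ i : τ, X i ^ 2) ∈ Q := ⟨σ0, σ, h0, hσ, e⟩
          have hm2 : C N - X i ^ 2 ∈ Q := by
            have hs : IsSumSq (∑ j ∈ Finset.univ.erase i, (X j ^ 2 : MvPolynomial τ ℝ)) := by
              apply IsSumSq.sum
              intro j _
              rw [pow_two]
              exact IsSumSq.mul_self _
            convert hQ.add_mem _ hm _ (hQ.sos_mem hs) using 1
            rw [← Finset.add_sum_erase _ _ (Finset.mem_univ i)]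
            ring
          have hm3 : C (|N|) - X i ^ 2 ∈ Q := by
            convert hQ.add_mem _ hm2 _ (hQ.const_mem (r := |N| - N)
              (by linarith [le_abs_self N])) using 1
            rw [MvPolynomial.algebraMap_eq, map_sub]; ring
          have hc : (C (1/2 : ℝ) : MvPolynomial τ ℝ) * 2 = 1 := by
            rw [← map_ofNat (C : ℝ →+* MvPolynomial τ ℝ) 2, ← map_mul]; norm_num
          refine ⟨|N| + 1/2 * (1/2), by positivity, ?_, ?_⟩
          · convert hQ.add_mem _ hm3 _ (hQ.sq_mul (X i + C (1/2)) 1 hQ.one_mem) using 1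
            rw [MvPolynomial.algebraMap_eq, map_add, map_mul]
            linear_combination -X i * hc
          · convert hQ.add_mem _ hm3 _ (hQ.sq_mul (X i - C (1/2)) 1 hQ.one_mem) using 1
            rw [MvPolynomial.algebraMap_eq, map_add, map_mul]
            linear_combination X i * hc
        -- product
        have hsqb : ∀ a : MvPolynomial τ ℝ, (∃ N : ℝ, 0 < N ∧
          algebraMap ℝ (MvPolynomial τ ℝ) N + a ∈ Q ∧ algebraMap ℝ (MvPolynomial τ ℝ) N - a ∈ Q) →
          (∃ N : ℝ, 0 < N ∧
          algebraMap ℝ (MvPolynomial τ ℝ) N - a * a ∈ Q) := by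
          rintro a ⟨N, hN, h1, h2⟩
          exact ⟨N ^ 2, by positivity, hQ.sq_bound hN h1 h2⟩
        have hnegb : ∀ a : MvPolynomial τ ℝ, (∃ N : ℝ, 0 < N ∧
          algebraMap ℝ (MvPolynomial τ ℝ) N + a ∈ Q ∧ algebraMap ℝ (MvPolynomial τ ℝ) N - a ∈ Q) →
          (∃ N : ℝ, 0 < N ∧
          algebraMap ℝ (MvPolynomial τ ℝ) N + -a ∈ Q ∧
            algebraMap ℝ (MvPolynomial τ ℝ) N - -a ∈ Q) := by
          rintro a ⟨N, hN, h1, h2⟩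
          exact ⟨N, hN, by rwa [← sub_eq_add_neg], by rwa [sub_neg_eq_add]⟩
        obtain ⟨N1, hN1, hp⟩ := hsqb _ (haddb _ _ iha hX)
        obtain ⟨N2, hN2, hm⟩ := hsqb _ (haddb _ _ iha (hnegb _ hX))
        have hc : (C (1/4 : ℝ) : MvPolynomial τ ℝ) * 4 = 1 := by
          rw [← map_ofNat (C : ℝ →+* MvPolynomial τ ℝ) 4, ← map_mul]; norm_num
        have hsmall : ∀ N N' : ℝ, ∀ b, N ≤ N' → algebraMap ℝ (MvPolynomial τ ℝ) N + b ∈ Q →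
            algebraMap ℝ (MvPolynomial τ ℝ) N' + b ∈ Q := by
          intro N N' b hNN hh
          convert hQ.add_mem _ hh _ (hQ.const_mem (sub_nonneg.2 hNN)) using 1
          rw [map_sub]; ring
        refine ⟨1/4 * N1 + 1/4 * N2, by positivity, ?_, ?_⟩
        · apply hsmall (1/4 * N2) _ _ (by linarith)
          convert hQ.smul_mem (r := 1/4) (by norm_num)
            (hQ.add_mem _ hm _ (hQ.sq_mul (a + X i) 1 hQ.one_mem)) using 1
          rw [map_mul, MvPolynomial.algebraMap_eq]
          linear_combination -a * X i * hc
        · rw [sub_eq_add_neg]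
          apply hsmall (1/4 * N1) _ _ (by linarith)
          convert hQ.smul_mem (r := 1/4) (by norm_num)
            (hQ.add_mem _ hp _ (hQ.sq_mul (a + -X i) 1 hQ.one_mem)) using 1
          rw [map_mul, MvPolynomial.algebraMap_eq]
          linear_combination a * X i * hc
    intro a
    obtain ⟨N, _, _, h⟩ := hb a
    exact ⟨N, h⟩
  refine QMod.putinar_abs hQ hA g fun α hα => ?_
  have hev : ∀ q, α q = eval (fun i => α (X i)) q := by
    intro q
    have : α = MvPolynomial.aeval (fun i => α (X i)) := by
      ext i; simp
    rw [← MvPolynomial.coe_aeval_eq_eval]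
    conv_lhs => rw [this]
    rfl
  rw [hev]
  apply hg
  intro j
  rw [← hev]
  exact hα _ (hHQ j)

theorem poly_approx {p : ℕ} {Y : Set (Fin p → ℝ)} (hY : IsCompact Y) (g : (Fin p → ℝ) → ℝ)
    (hg : Continuous g) {ε : ℝ} (hε : 0 < ε) :
    ∃ q : MvPolynomial (Fin p) ℝ, ∀ y ∈ Y, |eval y q - g y| < ε := by
  let co : Fin p → C(Fin p → ℝ, ℝ) := fun i => ⟨fun y => y i, continuous_apply i⟩
  let Φ : MvPolynomial (Fin p) ℝ →ₐ[ℝ] C(Fin p → ℝ, ℝ) := MvPolynomial.aeval co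
  have hΦ : ∀ q y, Φ q y = eval y q := by
    intro q y
    induction q using MvPolynomial.induction_on with
    | C r => simp [Φ]
    | add a b iha ihb => simp [iha, ihb]
    | mul_X a i ih => rw [map_mul, map_mul, ContinuousMap.mul_apply, ih]; simp [Φ, co]
  have hsep : Φ.range.SeparatesPoints := by
    intro x y hxy
    obtain ⟨i, hi⟩ := Function.ne_iff.1 hxy
    exact ⟨_, ⟨Φ (X i), ⟨X i, rfl⟩, rfl⟩, by simpa [hΦ] using hi⟩
  obtain ⟨_, ⟨q, rfl⟩, hq⟩ :=
    ContinuousMap.exists_mem_subalgebra_near_continuous_of_isCompact_of_separatesPoints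
      hsep ⟨g, hg⟩ hY hε
  refine ⟨q, fun y hy => ?_⟩
  have := hq y hy
  rw [← hΦ]
  exact this

theorem lsc_approx {n p : ℕ} {K : Set ((Fin n → ℝ) × (Fin p → ℝ))} (hK : IsCompact K)
    {Y : Set (Fin p → ℝ)} (F : (Fin n → ℝ) × (Fin p → ℝ) → ℝ) (hF : Continuous F)
    (hne : ∀ y ∈ Y, ∃ x, (x, y) ∈ K)
    (J : (Fin p → ℝ) → ℝ) (hJ : ∀ y ∈ Y, J y = sInf ((fun x => F (x, y)) '' {x | (x, y) ∈ K})) :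
    ∃ B : ℝ, ∃ g : ℕ → (Fin p → ℝ) → ℝ, (∀ k, Continuous (g k)) ∧
      (∀ y ∈ Y, |J y| ≤ B) ∧ (∀ y ∈ Y, ∀ x, (x, y) ∈ K → J y ≤ F (x, y)) ∧
      (∀ k, ∀ y ∈ Y, |g k y| ≤ B ∧ g k y ≤ J y) ∧
      (∀ y ∈ Y, Tendsto (fun k => g k y) atTop (𝓝 (J y))) := by
  obtain ⟨B, hB⟩ := hK.exists_bound_of_continuousOn hF.continuousOn
  have hlow : ∀ w ∈ K, -B ≤ F w := fun w hw => (abs_le.1 (hB w hw)).1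
  have hJle : ∀ y ∈ Y, ∀ x, (x, y) ∈ K → J y ≤ F (x, y) := by
    intro y hy x hx
    rw [hJ y hy]
    apply csInf_le
    · refine ⟨-B, ?_⟩
      rintro _ ⟨x, hx, rfl⟩
      exact hlow _ hx
    · exact ⟨x, hx, rfl⟩
  have hleJ : ∀ y ∈ Y, ∀ c, (∀ x, (x, y) ∈ K → c ≤ F (x, y)) → c ≤ J y := by
    intro y hy c hc
    rw [hJ y hy]
    apply le_csInf
    · obtain ⟨x, hx⟩ := hne y hy
      exact ⟨_, x, hx, rfl⟩
    · rintro _ ⟨x, hx, rfl⟩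
      exact hc x hx
  have hJB : ∀ y ∈ Y, |J y| ≤ B := by
    intro y hy
    obtain ⟨x, hx⟩ := hne y hy
    exact abs_le.2 ⟨hleJ y hy _ fun x hx => hlow _ hx,
      (hJle y hy x hx).trans (abs_le.1 (hB _ hx)).2⟩
  let G : ℕ → (Fin p → ℝ) → (Fin n → ℝ) × (Fin p → ℝ) → ℝ := fun k y w => F w + k * dist y w.2
  let g : ℕ → (Fin p → ℝ) → ℝ := fun k y => sInf (G k y '' K)
  have hgle : ∀ k y w, w ∈ K → g k y ≤ G k y w := by
    intro k y w hw
    apply csInf_le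
    · refine ⟨-B, ?_⟩
      rintro _ ⟨w, hw, rfl⟩
      have := hlow w hw
      have : 0 ≤ k * dist y w.2 := by positivity
      simp only [G]; linarith
    · exact ⟨w, hw, rfl⟩
  have hleg : ∀ k, ∀ y ∈ Y, ∀ c, (∀ w ∈ K, c ≤ G k y w) → c ≤ g k y := by
    intro k y hy c hc
    apply le_csInf
    · obtain ⟨x, hx⟩ := hne y hy
      exact ⟨_, _, hx, rfl⟩
    · rintro _ ⟨x, hx, rfl⟩
      exact hc x hx
  have hgJ : ∀ k, ∀ y ∈ Y, g k y ≤ J y := by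
    intro k y hy
    apply hleJ y hy
    intro x hx
    have := hgle k y _ hx
    simpa [G] using this
  refine ⟨B, g, fun k => ?_, hJB, hJle, ?_, ?_⟩
  · apply IsCompact.continuous_sInf hK
    change Continuous (fun z : (Fin p → ℝ) × ((Fin n → ℝ) × (Fin p → ℝ)) =>
      F z.2 + k * dist z.1 z.2.2)
    fun_prop
  · intro k y hy
    refine ⟨abs_le.2 ⟨?_, (hgJ k y hy).trans (abs_le.1 (hJB y hy)).2⟩, hgJ k y hy⟩
    apply hleg k y hy
    intro w hw
    have := hlow w hw
    have : 0 ≤ k * dist y w.2 := by positivity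
    simp only [G]; linarith
  · intro y hy
    rw [Metric.tendsto_atTop]
    intro ε hε
    let D : Set ((Fin n → ℝ) × (Fin p → ℝ)) := K ∩ {w | F w ≤ J y - ε / 2}
    have hD : IsCompact D := hK.inter_right (isClosed_le hF continuous_const)
    have hδ : ∃ δ > 0, ∀ w ∈ D, δ ≤ dist y w.2 := by
      rcases D.eq_empty_or_nonempty with h | h
      · exact ⟨1, one_pos, by simp [h]⟩
      · obtain ⟨w0, hw0, hmin⟩ := hD.exists_isMinOn h
          (f := fun w => dist y w.2) (by fun_prop)
        refine ⟨dist y w0.2, ?_, fun w hw => hmin hw⟩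
        refine dist_pos.2 fun hyw => ?_
        have h1 := hJle y hy w0.1 (by rw [hyw]; exact hw0.1)
        have h2 : F w0 ≤ J y - ε / 2 := hw0.2
        have h3 : J y ≤ F w0 := by rw [hyw] at h1 ⊢; exact h1
        linarith
    obtain ⟨δ, hδ, hdist⟩ := hδ
    obtain ⟨k0, hk0⟩ := exists_nat_gt (2 * B / δ)
    refine ⟨k0, fun k hk => ?_⟩
    have hk' : 2 * B < k * δ := by
      rw [div_lt_iff₀ hδ] at hk0
      have : (k0 : ℝ) ≤ k := by exact_mod_cast hk
      nlinarith
    have h1 : J y - ε / 2 ≤ g k y := by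
      apply hleg k y hy
      intro w hw
      have hd : 0 ≤ k * dist y w.2 := by positivity
      simp only [G]
      by_cases hwD : F w ≤ J y - ε / 2
      · have h2 := hdist w ⟨hw, hwD⟩
        have h3 : (k : ℝ) * δ ≤ k * dist y w.2 := by gcongr
        have := hlow w hw
        have := (abs_le.1 (hJB y hy)).2
        linarith
      · linarith
    have h2 := hgJ k y hy
    rw [Real.dist_eq, abs_lt]
    constructor <;> linarith

theorem almost_unif {p : ℕ} {Y : Set (Fin p → ℝ)} (hYm : MeasurableSet Y)
    (φ : Measure (Fin p → ℝ)) [IsProbabilityMeasure φ] (i0 : ℕ)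
    (J : (Fin p → ℝ) → ℝ) (q pt : ℕ → (Fin p → ℝ) → ℝ)
    (hJm : Measurable (Y.indicator J)) (hqm : ∀ i, Measurable (q i))
    (hint : ∀ i, IntegrableOn (fun y => J y - q i y) Y φ)
    (hle : ∀ i, i0 ≤ i → ∀ y ∈ Y, q i y ≤ J y)
    (hlim : Tendsto (fun i => ∫ y in Y, (J y - q i y) ∂φ) atTop (𝓝 0))
    (h0 : pt i0 = q i0)
    (hS : ∀ i, i0 ≤ i → pt (i + 1) = fun y => max (pt i y) (q (i + 1) y)) :
    ∀ ε : ENNReal, 0 < ε → ∃ A : Set (Fin p → ℝ),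
      A ⊆ Y ∧ MeasurableSet A ∧ φ A < ε ∧ TendstoUniformlyOn pt J atTop (Y \ A) := by
  have hptJ : ∀ i, i0 ≤ i → ∀ y ∈ Y, pt i y ≤ J y := by
    intro i hi y hy
    induction i, hi using Nat.le_induction with
    | base => rw [h0]; exact hle _ le_rfl y hy
    | succ i hi ih => rw [hS i hi]; exact max_le ih (hle _ (by omega) y hy)
  have hqpt : ∀ N, i0 ≤ N → ∀ i, N ≤ i → ∀ y, q N y ≤ pt i y := by
    intro N hN i hi y
    induction i, hi using Nat.le_induction with
    | base =>
      rcases hN.eq_or_lt with rfl | h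
      · rw [h0]
      · obtain ⟨M, rfl⟩ : ∃ M, N = M + 1 := ⟨N - 1, by omega⟩
        rw [hS M (by omega)]; exact le_max_right _ _
    | succ i hi ih => rw [hS i (by omega)]; exact ih.trans (le_max_left _ _)
  intro ε hε
  obtain ⟨δ, hδ, hsum⟩ := ENNReal.exists_pos_sum_of_countable hε.ne' ℕ
  have hN : ∀ k : ℕ, ∃ N, i0 ≤ N ∧ ∫ y in Y, (J y - q N y) ∂φ < (1 / ((k : ℝ) + 1)) * δ k := by
    intro k
    have hpos : 0 < (1 / ((k : ℝ) + 1)) * δ k := by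
      have : (0 : ℝ) < δ k := hδ k
      positivity
    obtain ⟨N, h1, h2⟩ := ((eventually_ge_atTop i0).and (hlim.eventually_lt_const hpos)).exists
    exact ⟨N, h1, h2⟩
  choose N hN1 hN2 using hN
  let S : ℕ → Set (Fin p → ℝ) := fun k => {y | 1 / ((k : ℝ) + 1) ≤ Y.indicator J y - q (N k) y} ∩ Y
  have hSm : ∀ k, MeasurableSet (S k) := fun k =>
    (measurableSet_le measurable_const (hJm.sub (hqm _))).inter hYm
  have hSμ : ∀ k, φ (S k) ≤ δ k := by
    intro k
    have hk : (0 : ℝ) < 1 / ((k : ℝ) + 1) := by positivity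
    have h1 := mul_meas_ge_le_integral_of_nonneg (μ := φ.restrict Y)
      (f := fun y => J y - q (N k) y)
      ((ae_restrict_iff' hYm).2 (Eventually.of_forall fun y hy =>
        sub_nonneg.2 (hle _ (hN1 k) y hy))) (hint _) (1 / ((k : ℝ) + 1))
    have h2 : (φ.restrict Y).real {y | 1 / ((k : ℝ) + 1) ≤ J y - q (N k) y} = φ.real (S k) := by
      simp only [Measure.real]
      rw [Measure.restrict_apply' hYm]
      congr 2
      ext y
      simp only [S, mem_inter_iff, mem_ofPred_eq]
      constructor
      · rintro ⟨a, b⟩; rw [indicator_of_mem b]; exact ⟨a, b⟩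
      · rintro ⟨a, b⟩; rw [indicator_of_mem b] at a; exact ⟨a, b⟩
    rw [h2] at h1
    have h3 : φ.real (S k) ≤ δ k := le_of_mul_le_mul_left (h1.trans (hN2 k).le) hk
    have h4 : φ (S k) = ENNReal.ofReal (φ.real (S k)) := by
      rw [Measure.real, ENNReal.ofReal_toReal (measure_ne_top _ _)]
    rw [h4]
    exact (ENNReal.ofReal_le_ofReal h3).trans (by simp)
  refine ⟨⋃ k, S k, iUnion_subset fun k => inter_subset_right, MeasurableSet.iUnion hSm, ?_, ?_⟩
  · exact (measure_iUnion_le _).trans_lt ((ENNReal.tsum_le_tsum hSμ).trans_lt hsum)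
  · rw [Metric.tendstoUniformlyOn_iff]
    intro η hη
    obtain ⟨k, hk⟩ := exists_nat_one_div_lt hη
    filter_upwards [eventually_ge_atTop (N k)] with i hi y hy
    have h1 : ¬ (1 / ((k : ℝ) + 1) ≤ J y - q (N k) y) := by
      intro hcon
      apply hy.2
      refine mem_iUnion.2 ⟨k, ?_, hy.1⟩
      simpa only [mem_ofPred_eq, indicator_of_mem hy.1] using hcon
    have h2 := hqpt _ (hN1 k) i hi y
    have h3 := hptJ i ((hN1 k).trans hi) y hy.1
    rw [Real.dist_eq, abs_lt]
    push Not at h1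
    constructor <;> linarith

/-- nearly optimal solutions of the dual SDP relaxations are polynomial
lower approximations of `J` converging in `L¹(φ)`, and their running maxima converge to
`J` almost uniformly on `Y`. -/
theorem stmt14 (n p m s : ℕ)
    (f : MvPolynomial (Fin n ⊕ Fin p) ℝ)
    (hx : Fin m → MvPolynomial (Fin n ⊕ Fin p) ℝ)
    (hy : Fin s → MvPolynomial (Fin p) ℝ)
    (H : Fin m ⊕ Fin s → MvPolynomial (Fin n ⊕ Fin p) ℝ)
    (hH : H = Sum.elim hx (fun k => rename Sum.inr (hy k)))
    (Y : Set (Fin p → ℝ)) (hYdef : Y = {y | ∀ k, 0 ≤ eval y (hy k)}) (hYc : IsCompact Y)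
    (K : Set ((Fin n → ℝ) × (Fin p → ℝ)))
    (hKdef : K = {w | w.2 ∈ Y ∧ ∀ j, 0 ≤ evalXY n p (hx j) w}) (hKc : IsCompact K)
    (Ky : (Fin p → ℝ) → Set (Fin n → ℝ))
    (hKy : ∀ y, Ky y = {x | ∀ j, 0 ≤ eval (Sum.elim x y) (hx j)})
    (hne : ∀ y ∈ Y, (Ky y).Nonempty)
    (harch : ArchimedeanQM n p H)
    (φ : Measure (Fin p → ℝ)) [IsProbabilityMeasure φ] (hφY : φ Yᶜ = 0)
    (γ : (Fin p → ℕ) → ℝ)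
    (hγ : ∀ β, γ β = ∫ y in Y, ∏ l, y l ^ β l ∂φ)
    (J : (Fin p → ℝ) → ℝ)
    (hJ : ∀ y, J y = sInf ((fun x => evalXY n p f (x, y)) '' Ky y))
    (ps : ℕ → MvPolynomial (Fin p) ℝ)
    (hfeas : ∀ i, iZero n p H f ≤ i →
      ∃ (σ0 : MvPolynomial (Fin n ⊕ Fin p) ℝ)
        (σ : Fin m ⊕ Fin s → MvPolynomial (Fin n ⊕ Fin p) ℝ),
        IsSumSq σ0 ∧ (∀ j, IsSumSq (σ j)) ∧
        f - rename Sum.inr (ps i) = σ0 + ∑ j, σ j * H j ∧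
        (ps i).totalDegree ≤ 2 * i ∧ σ0.totalDegree ≤ 2 * i ∧
        (∀ j, (σ j * H j).totalDegree ≤ 2 * i))
    (hnear : ∀ i, iZero n p H f ≤ i →
      rhoSDPdual n p H f Y φ i - 1 / (i : ℝ) ≤ ∫ y in Y, eval y (ps i) ∂φ)
    (ptilde : ℕ → (Fin p → ℝ) → ℝ)
    (hpt0 : ptilde (iZero n p H f) = fun y => eval y (ps (iZero n p H f)))
    (hptS : ∀ i, iZero n p H f ≤ i →
      ptilde (i + 1) = fun y => max (ptilde i y) (eval y (ps (i + 1)))) :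
    (∀ i, iZero n p H f ≤ i → ∀ y ∈ Y, eval y (ps i) ≤ J y) ∧
    Tendsto (fun i => ∫ y in Y, (J y - eval y (ps i)) ∂φ) atTop (𝓝 0) ∧
    (∀ ε : ENNReal, 0 < ε → ∃ A : Set (Fin p → ℝ),
      A ⊆ Y ∧ MeasurableSet A ∧ φ A < ε ∧
      TendstoUniformlyOn ptilde J atTop (Y \ A)) := by
  classical
  have hevc : ∀ q : MvPolynomial (Fin p) ℝ, Continuous fun y => eval y q :=
    fun q => MvPolynomial.continuous_eval q
  have hYm : MeasurableSet Y := hYc.isClosed.measurableSet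
  have hevr : ∀ (x : Fin n → ℝ) (y : Fin p → ℝ) (q : MvPolynomial (Fin p) ℝ),
      eval (Sum.elim x y) (rename Sum.inr q) = eval y q := by
    intro x y q
    rw [eval_rename, Sum.elim_comp_inr]
  have hKmem : ∀ x y, (x, y) ∈ K ↔ y ∈ Y ∧ x ∈ Ky y := by
    intro x y
    rw [hKdef, hKy]; rfl
  have hHK : ∀ x y, (x, y) ∈ K ↔ ∀ j, 0 ≤ eval (Sum.elim x y) (H j) := by
    intro x y
    rw [hKmem, hKy, hYdef, hH, Sum.forall]
    simp only [Sum.elim_inl, Sum.elim_inr, hevr, mem_ofPred_eq]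
    exact and_comm
  have hF : Continuous (evalXY n p f) := by
    unfold evalXY
    refine (MvPolynomial.continuous_eval f).comp ?_
    refine continuous_pi fun i => ?_
    rcases i with i | i
    · exact (continuous_apply i).comp continuous_fst
    · exact (continuous_apply i).comp continuous_snd
  have hJ' : ∀ y ∈ Y, J y = sInf ((fun x => evalXY n p f (x, y)) '' {x | (x, y) ∈ K}) := by
    intro y hy
    rw [hJ y]
    congr 2
    ext x
    simp only [mem_ofPred_eq, hKmem, hy, true_and]
  obtain ⟨B, g, hgc, hJB, hJle, hgB, hgt⟩ := lsc_approx hKc (evalXY n p f) hF (Y := Y)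
    (fun y hy => (hne y hy).imp fun x hx => (hKmem x y).2 ⟨hy, hx⟩) J hJ'
  -- any feasible polynomial is below `J`
  have hbelow : ∀ (pol : MvPolynomial (Fin p) ℝ) (σ0 : MvPolynomial (Fin n ⊕ Fin p) ℝ)
      (σ : Fin m ⊕ Fin s → MvPolynomial (Fin n ⊕ Fin p) ℝ),
      IsSumSq σ0 → (∀ j, IsSumSq (σ j)) →
      f - rename Sum.inr pol = σ0 + ∑ j, σ j * H j → ∀ y ∈ Y, eval y pol ≤ J y := by
    intro pol σ0 σ h0 hσ he y hy
    have hsos : ∀ (w : Fin n ⊕ Fin p → ℝ) (q : MvPolynomial (Fin n ⊕ Fin p) ℝ),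
        IsSumSq q → 0 ≤ eval w q := by
      intro w q hq
      induction hq with
      | zero => simp
      | sq_add a _ ih => rw [map_add, map_mul]; exact add_nonneg (mul_self_nonneg _) ih
    rw [hJ y]
    apply le_csInf ((hne y hy).image _)
    rintro _ ⟨x, hx, rfl⟩
    have h1 := congrArg (eval (Sum.elim x y)) he
    rw [map_sub, hevr, map_add, map_sum] at h1
    have h2 : 0 ≤ ∑ j, eval (Sum.elim x y) (σ j * H j) := by
      apply Finset.sum_nonneg
      intro j _
      rw [map_mul]
      exact mul_nonneg (hsos _ _ (hσ j)) ((hHK x y).1 ((hKmem x y).2 ⟨hy, hx⟩) j)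
    have h3 := hsos (Sum.elim x y) _ h0
    simp only [evalXY]
    linarith
  have hle : ∀ i, iZero n p H f ≤ i → ∀ y ∈ Y, eval y (ps i) ≤ J y := by
    intro i hi
    obtain ⟨σ0, σ, h0, hσ, he, -⟩ := hfeas i hi
    exact hbelow _ _ _ h0 hσ he
  -- measurability and integrability
  have hJm : Measurable (Y.indicator J) := by
    refine measurable_of_tendsto_metrizable (f := fun k => Y.indicator (g k))
      (fun k => (hgc k).measurable.indicator hYm) ?_
    rw [tendsto_pi_nhds]
    intro y
    by_cases hy : y ∈ Y
    · simpa only [indicator_of_mem hy] using hgt y hy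
    · simp only [indicator_of_notMem hy]; exact tendsto_const_nhds
  have hJint : IntegrableOn J Y φ := by
    rw [← integrable_indicator_iff hYm]
    refine Integrable.of_bound hJm.aestronglyMeasurable (|B|) (Eventually.of_forall fun y => ?_)
    by_cases hy : y ∈ Y
    · rw [indicator_of_mem hy]; exact (hJB y hy).trans (le_abs_self B)
    · rw [indicator_of_notMem hy]; simp
  have hcint : ∀ g : (Fin p → ℝ) → ℝ, Continuous g → IntegrableOn g Y φ :=
    fun g hg => hg.continuousOn.integrableOn_compact hYc
  have hmono : ∀ pol : MvPolynomial (Fin p) ℝ, (∀ y ∈ Y, eval y pol ≤ J y) →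
      ∫ y in Y, eval y pol ∂φ ≤ ∫ y in Y, J y ∂φ :=
    fun pol h => setIntegral_mono_on (hcint _ (hevc _)) hJint hYm h
  have hgint : Tendsto (fun k => ∫ y in Y, g k y ∂φ) atTop (𝓝 (∫ y in Y, J y ∂φ)) := by
    refine tendsto_integral_of_dominated_convergence (fun _ => B)
      (fun k => (hgc k).aestronglyMeasurable) (integrable_const _) (fun k => ?_) ?_
    · exact (ae_restrict_iff' hYm).2 (Eventually.of_forall fun y hy => (hgB k y hy).1)
    · exact (ae_restrict_iff' hYm).2 (Eventually.of_forall fun y hy => hgt y hy)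
  have hφ1 : φ.real Y = 1 := by
    have : φ Y = 1 := (prob_compl_eq_zero_iff hYm).1 hφY
    simp [Measure.real, this]
  -- values of the dual relaxations
  have hval : ∀ ε > 0, ∀ᶠ i in atTop, ∫ y in Y, J y ∂φ - ε ≤ rhoSDPdual n p H f Y φ i := by
    intro ε hε
    obtain ⟨k, hk⟩ := (hgint.eventually_const_lt
      (show ∫ y in Y, J y ∂φ - ε / 2 < ∫ y in Y, J y ∂φ by linarith)).exists
    obtain ⟨q, hq⟩ := poly_approx hYc (fun y => g k y - ε / 4) ((hgc k).sub continuous_const)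
      (show 0 < ε / 4 by linarith)
    have hq1 : ∀ y ∈ Y, eval y q < J y := by
      intro y hy
      have h1 := (abs_lt.1 (hq y hy)).2
      have h2 := (hgB k y hy).2
      linarith
    have hq2 : ∫ y in Y, J y ∂φ - ε ≤ ∫ y in Y, eval y q ∂φ := by
      have h1 : ∫ y in Y, (g k y - ε / 2) ∂φ ≤ ∫ y in Y, eval y q ∂φ := by
        refine setIntegral_mono_on (hcint _ ((hgc k).sub continuous_const)) (hcint _ (hevc q)) hYm ?_
        intro y hy
        have h1 := (abs_lt.1 (hq y hy)).1
        linarith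
      rw [integral_sub (hcint _ (hgc k)) (integrable_const _), setIntegral_const, hφ1] at h1
      simp only [one_smul] at h1
      linarith
    obtain ⟨σ0, σ, h0, hσ, he⟩ := putinar H harch (f - rename Sum.inr q) (by
      intro w hw
      have hw' : w = Sum.elim (w ∘ Sum.inl) (w ∘ Sum.inr) := (Sum.elim_comp_inl_inr w).symm
      rw [hw'] at hw ⊢
      have hK' := (hHK _ _).2 hw
      have hy' := ((hKmem _ _).1 hK').1
      have h1 := hJle _ hy' _ hK'
      have h2 := hq1 _ hy'
      rw [map_sub, hevr]
      simp only [evalXY] at h1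
      linarith)
    filter_upwards [eventually_ge_atTop (q.totalDegree + σ0.totalDegree +
      ∑ j, (σ j * H j).totalDegree)] with i hi
    refine hq2.trans (le_csSup ⟨∫ y in Y, J y ∂φ, ?_⟩ ?_)
    · rintro _ ⟨pol, τ0, τ, a1, a2, a3, -, -, -, rfl⟩
      exact hmono _ (hbelow _ _ _ a1 a2 a3)
    · refine ⟨q, σ0, σ, h0, hσ, he, by omega, by omega, fun j => ?_, rfl⟩
      have := Finset.single_le_sum (f := fun j => (σ j * H j).totalDegree)
        (fun _ _ => Nat.zero_le _) (Finset.mem_univ j)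
      omega
  have hint : ∀ i, IntegrableOn (fun y => J y - eval y (ps i)) Y φ :=
    fun i => hJint.sub (hcint _ (hevc _))
  have hlim : Tendsto (fun i => ∫ y in Y, (J y - eval y (ps i)) ∂φ) atTop (𝓝 0) := by
    rw [Metric.tendsto_atTop']
    intro ε hε
    have hinv : Tendsto (fun i : ℕ => 1 / (i : ℝ)) atTop (𝓝 0) := tendsto_one_div_atTop_nhds_zero_nat
    obtain ⟨M, hM⟩ := eventually_atTop.1 (((hval (ε / 2) (by linarith)).and
      (hinv.eventually_lt_const (show 0 < ε / 2 by linarith))).and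
      (eventually_ge_atTop (iZero n p H f)))
    refine ⟨M, fun i hi => ?_⟩
    obtain ⟨⟨h1, h2⟩, h3⟩ := hM i (le_of_lt hi)
    have h4 := hnear i h3
    have h5 := hmono _ (hle i h3)
    rw [integral_sub hJint (hcint _ (hevc _)), Real.dist_eq, abs_lt]
    constructor <;> linarith
  refine ⟨hle, hlim, ?_⟩
  exact almost_unif hYm φ (iZero n p H f) J (fun i y => eval y (ps i)) ptilde hJm
    (fun i => (hevc _).measurable) hint hle hlim hpt0 hptS
end
end
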